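/- arXiv:2505.00486 — 14 statements merged into one kernel-verified Lean document; each statement's English description precedes it below -/
import Mathlib

section
/- Let t, n be positive integers, let ℓ be a natural number, and let T : Fin ℓ → ℤ be a sequence with T i ≥ 1 for every i. Then the number of nonempty subsets S ⊆ Fin ℓ such that ∑_{i∈S} T i ≥ t·n and n divides ∑_{i∈S} T i is at least 2^(ℓ − t·n + 1) − 1, where the exponent ℓ − t·n + 1 is interpreted via truncated (natural-number) subtraction, so the bound is trivially 0 when ℓ + 1 ≤ t·n. -/
/-!
A nonempty subset whose sum is divisible by `m = t * n` has a positive sum, hence a sum `≥ t * n`,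
and that sum is divisible by `n`. So it suffices to show that at least `2 ^ (ℓ + 1 - m)` subsets
(the empty one included) have sum `0` in `ZMod m`. This is Olson's bound for the cyclic group of
order `m`, whose Davenport constant is at most `m` (`exists_zero_sum`, pigeonhole on partial sums).

Olson's bound (`olson`) is proved for every attained value `g`, by induction on the number of
terms. If there are at least `m` terms and `A` has sum `g`, negate the terms in `A` and take a
nonempty zero-sum subset `W` for the new sequence: `A ∆ W` is a second subset of sum `g`
(`exists_second`). Removing a term `x` on which the two subsets differ, both `g` and `g - f x` are
attained by the remaining terms, so the count at least doubles.
-/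

open Finset in
/-- The Davenport constant of `ZMod m` is at most `m`. -/
lemma exists_zero_sum {ι : Type*} {m : ℕ} [NeZero m] (s : Finset ι)
    (f : ι → ZMod m) (hs : m ≤ s.card) :
    ∃ W ⊆ s, W.Nonempty ∧ ∑ i ∈ W, f i = 0 := by
  classical
  let e := s.equivFin.symm
  let P : ℕ → ZMod m := fun j => ∑ a : Fin s.card with a.1 < j, f (e a)
  obtain ⟨i, hi, j, hj, hij, hP⟩ : ∃ i ∈ range (m + 1), ∃ j ∈ range (m + 1), i < j ∧ P i = P j := by
    obtain ⟨i, hi, j, hj, hne, h⟩ := exists_ne_map_eq_of_card_lt_of_maps_to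
      (s := range (m + 1)) (t := (univ : Finset (ZMod m))) (f := P)
      (by simp [ZMod.card]) (fun _ _ => by simp)
    rcases lt_or_gt_of_ne hne with h' | h'
    · exact ⟨i, hi, j, hj, h', h⟩
    · exact ⟨j, hj, i, hi, h', h.symm⟩
  let V : Finset (Fin s.card) := univ.filter fun a => i ≤ a.1 ∧ a.1 < j
  have hV : P i + ∑ a ∈ V, f (e a) = P j := by
    rw [← sum_union]
    · apply sum_congr _ (fun _ _ => rfl)
      ext a
      simp [V]
      omega
    · rw [disjoint_left]
      intro a
      simp [V]
      omega
  refine ⟨V.map (e.toEmbedding.trans (Function.Embedding.subtype _)), ?_, ?_, ?_⟩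
  · intro x hx
    simp only [mem_map] at hx
    obtain ⟨a, -, rfl⟩ := hx
    exact (e a).2
  · simp only [map_nonempty]
    simp only [mem_range] at hj
    exact ⟨⟨i, by omega⟩, by simp [V, hij]⟩
  · rw [sum_map]
    rw [hP] at hV
    simpa using hV

open Finset in
/-- With at least `m` terms, no value in `ZMod m` is attained by exactly one subset sum. -/
lemma exists_second {ι : Type*} [DecidableEq ι] {m : ℕ} [NeZero m] (s : Finset ι)
    (f : ι → ZMod m) (hs : m ≤ s.card) (A : Finset ι) (hA : A ⊆ s) :
    ∃ B ⊆ s, B ≠ A ∧ ∑ i ∈ B, f i = ∑ i ∈ A, f i := by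
  obtain ⟨W, hW, hne, h0⟩ := exists_zero_sum s (fun i => if i ∈ A then - f i else f i) hs
  refine ⟨symmDiff A W, ?_, ?_, ?_⟩
  · intro x hx
    rw [mem_symmDiff] at hx
    rcases hx with hx | hx
    · exact hA hx.1
    · exact hW hx.1
  · intro h
    rw [symmDiff_eq_left] at h
    exact hne.ne_empty h
  · have h1 : ∑ i ∈ symmDiff A W, f i = ∑ i ∈ A \ W, f i + ∑ i ∈ W \ A, f i :=
      sum_union disjoint_sdiff_sdiff
    have h2 : ∑ i ∈ A ∩ W, f i + ∑ i ∈ A \ W, f i = ∑ i ∈ A, f i := sum_inter_add_sum_sdiff A W f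
    rw [sum_ite, sum_neg_distrib, filter_mem_eq_inter, filter_notMem_eq_sdiff, inter_comm] at h0
    rw [h1, ← h2]
    linear_combination h0

open Finset in
/-- Olson's bound for `ZMod m`: every attained value is attained by at least
`2 ^ (|s| + 1 - m)` subsets. -/
lemma olson {ι : Type*} [DecidableEq ι] {m : ℕ} [NeZero m] (f : ι → ZMod m) (k : ℕ) :
    ∀ (s : Finset ι), s.card = k → ∀ A ⊆ s,
      2 ^ (k + 1 - m) ≤ (s.powerset.filter fun B => ∑ i ∈ B, f i = ∑ i ∈ A, f i).card := by
  induction k with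
  | zero =>
    intro s hs A hA
    have : 0 + 1 - m = 0 := by have := NeZero.pos m; omega
    rw [this, pow_zero, Nat.one_le_iff_ne_zero, ← Nat.pos_iff_ne_zero, card_pos]
    exact ⟨A, by simpa using hA⟩
  | succ k ih =>
    intro s hs A hA
    by_cases hm : k + 1 < m
    · have : k + 1 + 1 - m = 0 := by omega
      rw [this, pow_zero, Nat.one_le_iff_ne_zero, ← Nat.pos_iff_ne_zero, card_pos]
      exact ⟨A, by simpa using hA⟩
    obtain ⟨x, C, D, hC, hD, hxC, hxD, hCg, hDg⟩ : ∃ x, ∃ C D : Finset ι, C ⊆ s ∧ D ⊆ s ∧ x ∈ C ∧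
        x ∉ D ∧ ∑ i ∈ C, f i = ∑ i ∈ A, f i ∧ ∑ i ∈ D, f i = ∑ i ∈ A, f i := by
      obtain ⟨B, hB, hne, hg⟩ := exists_second s f (by omega) A hA
      by_cases h : B ⊆ A
      · obtain ⟨x, hx, hx'⟩ := not_subset.1 fun h' => hne (h.antisymm h')
        exact ⟨x, A, B, hA, hB, hx, hx', rfl, hg⟩
      · obtain ⟨x, hx, hx'⟩ := not_subset.1 h
        exact ⟨x, B, A, hB, hA, hx, hx', hg, rfl⟩
    have hcard : (s.erase x).card = k := by rw [card_erase_of_mem (hC hxC), hs]; rfl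
    have i1 := ih _ hcard D (subset_erase.2 ⟨hD, hxD⟩)
    have i2 := ih _ hcard (C.erase x) (erase_subset_erase x hC)
    have hCx := add_sum_erase C f hxC
    set F1 := (s.erase x).powerset.filter fun B => ∑ i ∈ B, f i = ∑ i ∈ D, f i with hF1
    set F2 := (s.erase x).powerset.filter fun B => ∑ i ∈ B, f i = ∑ i ∈ C.erase x, f i with hF2
    have hx2 : ∀ B ∈ F2, x ∉ B := by
      intro B hB
      simp only [hF2, mem_filter, mem_powerset, subset_erase] at hB
      exact hB.1.2
    have hinj : (F2.image (insert x)).card = F2.card := by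
      apply card_image_of_injOn
      intro B hB B' hB' h
      rw [← erase_insert (hx2 B hB), ← erase_insert (hx2 B' hB')]
      exact congrArg (fun Z => erase Z x) h
    have hdisj : Disjoint F1 (F2.image (insert x)) := by
      rw [disjoint_left]
      intro B hB hB'
      simp only [hF1, mem_filter, mem_powerset, subset_erase] at hB
      obtain ⟨B', -, rfl⟩ := mem_image.1 hB'
      exact hB.1.2 (mem_insert_self _ _)
    have hpow : k + 1 + 1 - m = (k + 1 - m) + 1 := by omega
    calc 2 ^ (k + 1 + 1 - m) = 2 ^ (k + 1 - m) + 2 ^ (k + 1 - m) := by rw [hpow, pow_succ, mul_two]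
      _ ≤ F1.card + F2.card := add_le_add i1 i2
      _ = (F1 ∪ F2.image (insert x)).card := by rw [card_union_of_disjoint hdisj, hinj]
      _ ≤ _ := by
        apply card_le_card
        intro B hB
        rw [mem_filter, mem_powerset]
        rcases mem_union.1 hB with h | h
        · simp only [hF1, mem_filter, mem_powerset, subset_erase] at h
          exact ⟨h.1.1, h.2.trans hDg⟩
        · obtain ⟨B', hB', rfl⟩ := mem_image.1 h
          have hxB := hx2 B' hB'
          simp only [hF2, mem_filter, mem_powerset, subset_erase] at hB'
          refine ⟨insert_subset (hC hxC) hB'.1.1, ?_⟩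
          rw [sum_insert hxB, hB'.2, hCx, hCg]

theorem stmt0 (t n ℓ : ℕ) (ht : 1 ≤ t) (hn : 1 ≤ n) (T : Fin ℓ → ℤ)
    (hT : ∀ i, 1 ≤ T i) :
    2 ^ (ℓ + 1 - t * n) - 1 ≤
      Nat.card {S : Finset (Fin ℓ) //
        S.Nonempty ∧ ((t * n : ℕ) : ℤ) ≤ ∑ i ∈ S, T i ∧ (n : ℤ) ∣ ∑ i ∈ S, T i} := by
  classical
  have : NeZero (t * n) := ⟨by positivity⟩
  have h := olson (m := t * n) (fun i => (T i : ZMod (t * n))) ℓ Finset.univ (by simp) ∅ (by simp)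
  rw [Nat.card_eq_fintype_card, Fintype.card_subtype]
  refine (Nat.sub_le_sub_right h 1).trans ?_
  rw [← Finset.card_erase_of_mem (a := ∅) (by simp)]
  apply Finset.card_le_card
  intro S hS
  obtain ⟨hne, hS⟩ := Finset.mem_erase.1 hS
  have h0 := (Finset.mem_filter.1 hS).2
  rw [Finset.sum_empty] at h0
  have hne' := Finset.nonempty_iff_ne_empty.2 hne
  have hdvd : ((t * n : ℕ) : ℤ) ∣ ∑ i ∈ S, T i := by
    rw [← ZMod.intCast_zmod_eq_zero_iff_dvd]
    exact_mod_cast h0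
  have hpos : 0 < ∑ i ∈ S, T i :=
    Finset.sum_pos (fun i _ => by linarith [hT i]) hne'
  simp only [Finset.mem_filter, Finset.mem_univ, true_and]
  exact ⟨hne', Int.le_of_dvd hpos hdvd,
    (Int.natCast_dvd_natCast.2 (Dvd.intro_left t rfl)).trans hdvd⟩
end

section
/- For all integers m ≥ 0 and h, n ≥ 1, the sum of the binomial coefficients C(m, j·n) over all integers j ≥ h (equivalently, over j in the range h ≤ j ≤ m, since the terms vanish for j·n > m) is at least 2^(m − h·n + 1) − 1, where the exponent m − h·n + 1 is interpreted via truncated (natural-number) subtraction. -/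
/-!
Write `m = a + k` with `a = h * n ≥ n`; the case `m < h * n` is trivial. The claim becomes
`2 ^ (k + 1) - 1 ≤ ∑ j, C(a + k, a + j n)`, proved by induction on `k`. By Pascal's rule the step
adds `∑ j, C(a + k, (a - 1) + j n)`, so it is enough that this is at least `2 ^ (k + 1)`.

That bound is `two_pow_le_sum_choose`: among binary strings of length `k + a` with `a ≥ n - 1`, at
least `2 ^ k` have weight in `{c, c + n, c + 2n, …}`, for every `c ≤ a`. It follows by induction on
`k` from Pascal's rule, which replaces `c` by `c` and `c - 1`; when `c = 0`, the value `c - 1`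
wraps around to `n - 1 ≤ a`.
-/

/-- The summation bound `N` only has to exceed `k`, since each use of Pascal's rule at `c = 0`
shifts the index `j` by one. -/
lemma two_pow_le_sum_choose (n a : ℕ) (hn : 1 ≤ n) (ha : n ≤ a + 1) (k : ℕ) :
    ∀ c N : ℕ, c ≤ a → k + 1 ≤ N →
      2 ^ k ≤ ∑ j ∈ Finset.range N, (k + a).choose (c + j * n) := by
  induction k with
  | zero =>
    intro c N hc hN
    have h0 : (0 + a).choose (c + 0 * n) ≤
        ∑ j ∈ Finset.range N, (0 + a).choose (c + j * n) :=
      Finset.single_le_sum (f := fun j => (0 + a).choose (c + j * n))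
        (fun _ _ => Nat.zero_le _) (Finset.mem_range.2 (by omega))
    have h1 : 0 < (0 + a).choose (c + 0 * n) := Nat.choose_pos (by omega)
    simp only [pow_zero]
    omega
  | succ k ih =>
    intro c N hc hN
    rcases c with _ | c
    · obtain ⟨N, rfl⟩ : ∃ N', N = N' + 1 := ⟨N - 1, by omega⟩
      have h1 := ih 0 (N + 1) (by omega) (by omega)
      have h2 := ih (n - 1) N (by omega) (by omega)
      rw [Finset.sum_range_succ'] at h1 ⊢
      have key : ∀ j, (k + 1 + a).choose (0 + (j + 1) * n) =
          (k + a).choose (n - 1 + j * n) + (k + a).choose (0 + (j + 1) * n) := by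
        intro j
        have e : 0 + (j + 1) * n = (n - 1 + j * n) + 1 := by
          rw [add_mul]; omega
        rw [e, show k + 1 + a = (k + a) + 1 by omega, Nat.choose_succ_succ']
      simp only [key, Finset.sum_add_distrib]
      simp only [zero_mul, add_zero, Nat.choose_zero_right] at h1 ⊢
      rw [pow_succ]
      omega
    · have h1 := ih (c + 1) N hc (by omega)
      have h2 := ih c N (by omega) (by omega)
      have key : ∀ j, (k + 1 + a).choose (c + 1 + j * n) =
          (k + a).choose (c + j * n) + (k + a).choose (c + 1 + j * n) := by
        intro j
        rw [show c + 1 + j * n = (c + j * n) + 1 by omega,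
          show k + 1 + a = (k + a) + 1 by omega, Nat.choose_succ_succ']
      simp only [key, Finset.sum_add_distrib]
      rw [pow_succ]
      omega

lemma two_pow_le_sum_choose_add_one (n b : ℕ) (hn : 1 ≤ n) (hb : n ≤ b + 1) (k : ℕ) :
    ∀ N : ℕ, k + 1 ≤ N →
      2 ^ (k + 1) ≤ ∑ j ∈ Finset.range N, (b + 1 + k).choose (b + 1 + j * n) + 1 := by
  induction k with
  | zero =>
    intro N hN
    have h0 := two_pow_le_sum_choose n (b + 1) hn (by omega) 0 (b + 1) N le_rfl hN
    simp only [pow_zero, zero_add, add_zero, pow_one] at h0 ⊢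
    omega
  | succ k ih =>
    intro N hN
    have h1 := ih N (by omega)
    have h2 := two_pow_le_sum_choose n b hn hb (k + 1) b N le_rfl hN
    have key : ∀ j, (b + 1 + (k + 1)).choose (b + 1 + j * n) =
        (k + 1 + b).choose (b + j * n) + (b + 1 + k).choose (b + 1 + j * n) := by
      intro j
      rw [show b + 1 + j * n = (b + j * n) + 1 by omega,
        show b + 1 + (k + 1) = (k + 1 + b) + 1 by omega, Nat.choose_succ_succ',
        show b + 1 + k = k + 1 + b by omega]
    simp only [key, Finset.sum_add_distrib]
    rw [pow_succ]
    omega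

theorem stmt1 (m h n : ℕ) (hh : 1 ≤ h) (hn : 1 ≤ n) :
    2 ^ (m + 1 - h * n) - 1 ≤ ∑ j ∈ Finset.Icc h m, m.choose (j * n) := by
  rcases Nat.lt_or_ge m (h * n) with hm | hm
  · simp [show m + 1 - h * n = 0 by omega]
  · have hhn : h ≤ h * n := Nat.le_mul_of_pos_right h hn
    have hnh : n ≤ h * n := Nat.le_mul_of_pos_left n hh
    have main := two_pow_le_sum_choose_add_one n (h * n - 1) hn (by omega) (m - h * n)
      (m + 1 - h) (by omega)
    rw [show h * n - 1 + 1 = h * n by omega, show h * n + (m - h * n) = m by omega,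
      show m - h * n + 1 = m + 1 - h * n by omega] at main
    have e : ∑ j ∈ Finset.Icc h m, m.choose (j * n) =
        ∑ j ∈ Finset.range (m + 1 - h), m.choose (h * n + j * n) := by
      rw [← Finset.Ico_add_one_right_eq_Icc, Finset.sum_Ico_eq_sum_range]
      simp only [add_mul]
    rw [e]
    omega
end

section
/- Let H₁ : Fin ℓ₁ → ℤ and H₂ : Fin ℓ₂ → ℤ be nonempty sequences of positive integers (all terms ≥ 1). If both H₁ and H₂ are 1-smooth, then the concatenated sequence H₁·H₂ (the function on Fin (ℓ₁ + ℓ₂) whose first ℓ₁ values are those of H₁ and whose remaining values are those of H₂) is 1-smooth. -/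
/-! A target `s ≤ ∑ H₁` is already a subset sum of `H₁`. A larger target, `s = ∑ H₁ + t` with
`1 ≤ t ≤ ∑ H₂`, is reached by taking all of `H₁` together with a subset of `H₂` of sum `t`.
Positivity of the terms gives the converse bounds. -/

/-- A nonempty sequence of positive integers is `1`-smooth if the set of sums of its
nonempty subsequences equals the integer interval `[1, total sum]`. -/
def IsOneSmooth {ℓ : ℕ} (T : Fin ℓ → ℤ) : Prop :=
  {s : ℤ | ∃ S : Finset (Fin ℓ), S.Nonempty ∧ ∑ i ∈ S, T i = s} = Set.Icc 1 (∑ i, T i)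

/-- Subsets of `Fin (ℓ₁ + ℓ₂)` are taken as images of disjoint sums `S₁ ⊕ S₂`, so that the sum of
the concatenation splits. -/
lemma sum_append_disjSum {ℓ₁ ℓ₂ : ℕ} (H₁ : Fin ℓ₁ → ℤ) (H₂ : Fin ℓ₂ → ℤ)
    (S₁ : Finset (Fin ℓ₁)) (S₂ : Finset (Fin ℓ₂)) :
    ∑ i ∈ (S₁.disjSum S₂).map finSumFinEquiv.toEmbedding, Fin.append H₁ H₂ i
      = ∑ i ∈ S₁, H₁ i + ∑ i ∈ S₂, H₂ i := by
  simp [Finset.sum_map, Finset.sum_disjSum]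

theorem stmt3 {ℓ₁ ℓ₂ : ℕ} (h₁ : 1 ≤ ℓ₁) (h₂ : 1 ≤ ℓ₂)
    (H₁ : Fin ℓ₁ → ℤ) (H₂ : Fin ℓ₂ → ℤ)
    (hpos₁ : ∀ i, 1 ≤ H₁ i) (hpos₂ : ∀ i, 1 ≤ H₂ i)
    (hsm₁ : IsOneSmooth H₁) (hsm₂ : IsOneSmooth H₂) :
    IsOneSmooth (Fin.append H₁ H₂) := by
  have hpos : ∀ i, 1 ≤ Fin.append H₁ H₂ i := fun i => by
    refine Fin.addCases (fun j => ?_) (fun j => ?_) i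
    · simpa using hpos₁ j
    · simpa using hpos₂ j
  have htotal : ∑ i, Fin.append H₁ H₂ i = ∑ i, H₁ i + ∑ i, H₂ i := by
    simp [Fin.sum_univ_add]
  ext s
  constructor
  · rintro ⟨S, ⟨a, ha⟩, rfl⟩
    have hnonneg : ∀ i, 0 ≤ Fin.append H₁ H₂ i := fun i => zero_le_one.trans (hpos i)
    exact ⟨(hpos a).trans (Finset.single_le_sum (fun i _ => hnonneg i) ha),
      Finset.sum_le_sum_of_subset_of_nonneg (Finset.subset_univ S) fun i _ _ => hnonneg i⟩
  · rintro ⟨hs_one, hs_total⟩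
    rw [htotal] at hs_total
    rcases le_or_gt s (∑ i, H₁ i) with hle | hgt
    · obtain ⟨S₁, hS₁, hsum⟩ := hsm₁.ge ⟨hs_one, hle⟩
      refine ⟨(S₁.disjSum ∅).map finSumFinEquiv.toEmbedding, ?_, ?_⟩
      · simpa using hS₁
      · rw [sum_append_disjSum, hsum, Finset.sum_empty, add_zero]
    · have ht : s - ∑ i, H₁ i ∈ Set.Icc 1 (∑ i, H₂ i) := ⟨by lia, by lia⟩
      obtain ⟨S₂, hS₂, hsum⟩ := hsm₂.ge ht
      refine ⟨(Finset.univ.disjSum S₂).map finSumFinEquiv.toEmbedding, ?_, ?_⟩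
      · obtain ⟨b, hb⟩ := hS₂
        exact ⟨_, Finset.mem_map_of_mem _ (Finset.inr_mem_disjSum.2 hb)⟩
      · rw [sum_append_disjSum, hsum, add_sub_cancel]
end

section
/- Let ℓ ≥ 2 and let H : Fin ℓ → ℤ be a sequence of positive integers (all terms ≥ 1). Let i₀ be an index attaining the least term, i.e., H i₀ ≤ H i for all i. If the restriction of H to the complement of {i₀} (a sequence of positive integers indexed by the ℓ − 1 remaining indices) is 1-smooth, then H itself is 1-smooth. -/
/-! Let `M` be the sum of the terms other than `H i₀`. By hypothesis the subset sums avoiding `i₀`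
fill `[1, M]`, so those using `i₀` and at least one other index fill `[1 + H i₀, M + H i₀]`. As `i₀`
attains the minimum and another index exists, `H i₀ ≤ M`, so the two intervals together cover
`[1, M + H i₀]`. -/

/-- The restriction of a sequence of positive integers to a finite index set `I` is
`1`-smooth if the set of sums of its nonempty subsequences supported in `I` equals the
integer interval `[1, ∑ i ∈ I, T i]`. -/
def IsOneSmoothOn {ℓ : ℕ} (T : Fin ℓ → ℤ) (I : Finset (Fin ℓ)) : Prop :=
  {s : ℤ | ∃ S ⊆ I, S.Nonempty ∧ ∑ i ∈ S, T i = s} = Set.Icc 1 (∑ i ∈ I, T i)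

theorem stmt4 {ℓ : ℕ} (hℓ : 2 ≤ ℓ) (H : Fin ℓ → ℤ) (hpos : ∀ i, 1 ≤ H i)
    (i₀ : Fin ℓ) (hmin : ∀ i, H i₀ ≤ H i)
    (hsm : IsOneSmoothOn H ({i₀}ᶜ : Finset (Fin ℓ))) :
    IsOneSmoothOn H (Finset.univ : Finset (Fin ℓ)) := by
  have hM : ∑ i, H i = H i₀ + ∑ i ∈ ({i₀}ᶜ : Finset (Fin ℓ)), H i :=
    Fintype.sum_eq_add_sum_compl i₀ H
  ext s
  constructor
  · rintro ⟨S, hS, ⟨j, hj⟩, rfl⟩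
    have hnonneg : ∀ i, 0 ≤ H i := fun i => by linarith [hpos i]
    exact ⟨(hpos j).trans (Finset.single_le_sum (fun i _ => hnonneg i) hj),
      Finset.sum_le_sum_of_subset_of_nonneg hS fun i _ _ => hnonneg i⟩
  · rintro ⟨h1, h2⟩
    have key : ∀ t ∈ Set.Icc (1 : ℤ) (∑ i ∈ ({i₀}ᶜ : Finset (Fin ℓ)), H i),
        ∃ S ⊆ ({i₀}ᶜ : Finset (Fin ℓ)), S.Nonempty ∧ ∑ i ∈ S, H i = t := fun t ht => by
      rw [← hsm] at ht
      exact ht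
    by_cases hs : s ≤ ∑ i ∈ ({i₀}ᶜ : Finset (Fin ℓ)), H i
    · obtain ⟨S, -, hne, hsum⟩ := key s ⟨h1, hs⟩
      exact ⟨S, Finset.subset_univ S, hne, hsum⟩
    -- The least term is at most the sum `M` of the others, so `M < s` gives `1 ≤ s - H i₀ ≤ M`.
    · have : Nontrivial (Fin ℓ) := Fin.nontrivial_iff_two_le.mpr hℓ
      obtain ⟨j, hj⟩ := exists_ne i₀
      have hle : H j ≤ ∑ i ∈ ({i₀}ᶜ : Finset (Fin ℓ)), H i :=
        Finset.single_le_sum (fun i _ => by linarith [hpos i]) (by simpa using hj)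
      have hj' := hmin j
      obtain ⟨S, hS, -, hsum⟩ := key (s - H i₀) ⟨by omega, by omega⟩
      have hi : i₀ ∉ S := fun h => by simpa using hS h
      refine ⟨insert i₀ S, Finset.subset_univ _, Finset.insert_nonempty _ _, ?_⟩
      rw [Finset.sum_insert hi, hsum]
      ring
end

section
/- Let n ≥ 1 and let T : Fin ℓ → ℤ be a sequence of positive integers (all terms ≥ 1) with ℓ ≥ n such that T is not 1-smooth. Then there exists a nonempty subset K ⊆ Fin ℓ such that n divides ∑_{i∈K} T i, and ∑_{i∈K} T i ≥ 2·|K|, and |K| ≥ ℓ − (n − 1). -/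
/-- The set of subset sums, modulo `n`, of the family `T` over `S`; the empty sum counts. -/
def subsetSumsMod {ι : Type*} (n : ℕ) (T : ι → ℤ) (S : Finset ι) : Finset (ZMod n) :=
  S.powerset.image fun U => ((∑ i ∈ U, T i : ℤ) : ZMod n)

theorem mem_subsetSumsMod {ι : Type*} {n : ℕ} {T : ι → ℤ} {S : Finset ι} {a : ZMod n} :
    a ∈ subsetSumsMod n T S ↔ ∃ U ⊆ S, ((∑ i ∈ U, T i : ℤ) : ZMod n) = a := by
  simp [subsetSumsMod]

/-- As long as no zero-sum subset meets `B`, each index of `B` contributes a new subset sum. -/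
theorem card_subsetSumsMod_add_card_le {ι : Type*} [DecidableEq ι] {n : ℕ} (T : ι → ℤ)
    (S B : Finset ι) (hdisj : Disjoint S B)
    (h : ∀ U ⊆ S ∪ B, (∃ x ∈ U, x ∈ B) → ((∑ i ∈ U, T i : ℤ) : ZMod n) ≠ 0) :
    (subsetSumsMod n T S).card + B.card ≤ (subsetSumsMod n T (S ∪ B)).card := by
  induction B using Finset.induction_on with
  | empty => simp
  | insert x B hx ih =>
    rw [Finset.disjoint_insert_right] at hdisj
    have ih' := ih hdisj.2 fun U hU ⟨y, hyU, hyB⟩ =>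
      h U (hU.trans (Finset.union_subset_union_right (Finset.subset_insert _ _)))
        ⟨y, hyU, Finset.mem_insert_of_mem hyB⟩
    rw [Finset.card_insert_of_notMem hx]
    have hxSB : x ∉ S ∪ B := by simp [hdisj.1, hx]
    have hsub : subsetSumsMod n T (S ∪ B) ⊆ subsetSumsMod n T (S ∪ insert x B) := by
      intro a ha
      obtain ⟨U, hU, rfl⟩ := mem_subsetSumsMod.1 ha
      exact mem_subsetSumsMod.2
        ⟨U, hU.trans (Finset.union_subset_union_right (Finset.subset_insert _ _)), rfl⟩
    have hne : subsetSumsMod n T (S ∪ B) ≠ subsetSumsMod n T (S ∪ insert x B) := by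
      intro heq
      -- If nothing new appears, translation by `T x` permutes the finite set of sums, so it hits 0.
      have hmaps : ∀ a ∈ subsetSumsMod n T (S ∪ B),
          a + (T x : ZMod n) ∈ subsetSumsMod n T (S ∪ B) := by
        intro a ha
        obtain ⟨U, hU, rfl⟩ := mem_subsetSumsMod.1 ha
        rw [heq]
        refine mem_subsetSumsMod.2 ⟨insert x U, ?_, ?_⟩
        · rw [Finset.union_insert]
          exact Finset.insert_subset_insert _ hU
        · rw [Finset.sum_insert fun hxU => hxSB (hU hxU)]
          push_cast
          ring
      have hsurj := Finset.surjOn_of_injOn_of_card_le (fun a : ZMod n => a + (T x : ZMod n))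
        hmaps (fun a _ b _ hab => add_right_cancel hab) le_rfl
      have hzero : (0 : ZMod n) ∈ subsetSumsMod n T (S ∪ B) :=
        mem_subsetSumsMod.2 ⟨∅, by simp, by simp⟩
      obtain ⟨a, ha, hax⟩ := hsurj (Finset.mem_coe.2 hzero)
      obtain ⟨U, hU, rfl⟩ := mem_subsetSumsMod.1 (Finset.mem_coe.1 ha)
      refine h (insert x U) ?_ ⟨x, by simp, by simp⟩ ?_
      · rw [Finset.union_insert]
        exact Finset.insert_subset_insert _ hU
      · rw [Finset.sum_insert fun hxU => hxSB (hU hxU)]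
        push_cast
        push_cast at hax
        rw [add_comm]
        exact hax
    have := Finset.card_lt_card (hsub.ssubset_of_ne hne)
    omega

theorem exists_zero_sum_of_lt {ι : Type*} [DecidableEq ι] {n : ℕ} [NeZero n] (T : ι → ℤ)
    (S B : Finset ι) (hdisj : Disjoint S B)
    (hlt : n < (subsetSumsMod n T S).card + B.card) :
    ∃ U ⊆ S ∪ B, (∃ x ∈ U, x ∈ B) ∧ (n : ℤ) ∣ ∑ i ∈ U, T i := by
  by_contra! hno
  have h1 := card_subsetSumsMod_add_card_le (n := n) T S B hdisj fun U hU hx h0 =>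
    hno U hU hx ((ZMod.intCast_zmod_eq_zero_iff_dvd _ n).1 h0)
  have h2 := Finset.card_le_univ (subsetSumsMod n T (S ∪ B))
  rw [ZMod.card] at h2
  omega

/-- The subset sums of `T` over `S`, the empty one included, fill the interval
`[0, ∑ i ∈ S, T i]`. -/
def FillsInterval {ι : Type*} (T : ι → ℤ) (S : Finset ι) : Prop :=
  ∀ m : ℤ, 0 ≤ m → m ≤ ∑ i ∈ S, T i → ∃ U ⊆ S, ∑ i ∈ U, T i = m

theorem FillsInterval.insert {ι : Type*} [DecidableEq ι] {T : ι → ℤ} {S : Finset ι}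
    (hS : FillsInterval T S) {x : ι} (hx : x ∉ S) (hle : T x ≤ ∑ i ∈ S, T i + 1) :
    FillsInterval T (insert x S) := by
  intro m hm0 hm
  rw [Finset.sum_insert hx] at hm
  by_cases hms : m ≤ ∑ i ∈ S, T i
  · obtain ⟨U, hU, hUm⟩ := hS m hm0 hms
    exact ⟨U, hU.trans (Finset.subset_insert _ _), hUm⟩
  · obtain ⟨U, hU, hUm⟩ := hS (m - T x) (by omega) (by omega)
    refine ⟨Insert.insert x U, Finset.insert_subset_insert _ hU, ?_⟩
    rw [Finset.sum_insert fun hxU => hx (hU hxU), hUm]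
    ring

theorem FillsInterval.le_card_subsetSumsMod {ι : Type*} {T : ι → ℤ} {S : Finset ι}
    (hS : FillsInterval T S) {n k : ℕ} (hkn : k ≤ n) (hk : (k : ℤ) ≤ ∑ i ∈ S, T i + 1) :
    k ≤ (subsetSumsMod n T S).card := by
  have := Finset.card_le_card_of_injOn (s := Finset.range k) (t := subsetSumsMod n T S)
    (fun j : ℕ => (j : ZMod n)) ?_ ?_
  · simpa using this
  · intro j hj
    have hj' : j < k := by simpa using hj
    obtain ⟨U, hU, hUj⟩ := hS j (by omega) (by omega)
    exact Finset.mem_coe.2 (mem_subsetSumsMod.2 ⟨U, hU, by rw [hUj]; simp⟩)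
  · intro i hi j hj hij
    have hi' : i < k := by simpa using hi
    have hj' : j < k := by simpa using hj
    have := (ZMod.natCast_eq_natCast_iff' i j n).1 hij
    rwa [Nat.mod_eq_of_lt (by omega), Nat.mod_eq_of_lt (by omega)] at this

/-- One term of size at least `s + 2` makes up for the deficit of all the ones in `S`, whose number
is at most `s`. -/
theorem two_mul_card_le {ι : Type*} [DecidableEq ι] {T : ι → ℤ} (hpos : ∀ i, 1 ≤ T i)
    {S K : Finset ι} (hbig : ∀ i ∉ S, ∑ j ∈ S, T j + 2 ≤ T i)
    (hK : ∃ x ∈ K, x ∉ S) : 2 * (K.card : ℤ) ≤ ∑ i ∈ K, T i := by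
  obtain ⟨x, hxK, hxS⟩ := hK
  have hcard : (S.card : ℤ) ≤ ∑ j ∈ S, T j := by
    have := Finset.card_nsmul_le_sum S T 1 fun i _ => hpos i
    simpa using this
  have hrest : 2 * ((K.erase x).card : ℤ) - S.card ≤ ∑ i ∈ K.erase x, T i := by
    have h1 : ∑ i ∈ K.erase x, (2 - if i ∈ S then (1 : ℤ) else 0) ≤ ∑ i ∈ K.erase x, T i := by
      refine Finset.sum_le_sum fun i _ => ?_
      split_ifs with hi
      · have := hpos i
        omega
      · have := hbig i hi
        omega
    have h2 : ((K.erase x ∩ S).card : ℤ) ≤ S.card := by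
      exact_mod_cast Finset.card_le_card Finset.inter_subset_right
    rw [Finset.sum_sub_distrib, Finset.sum_ite_mem] at h1
    simp only [Finset.sum_const, nsmul_eq_mul, mul_one] at h1
    linarith
  have hx := hbig x hxS
  rw [← Finset.add_sum_erase K T hxK, ← Finset.card_erase_add_one hxK]
  push_cast
  linarith

/-- An inclusion-maximal interval-filling set works: a smaller term outside it could be adjoined. -/
theorem exists_maximal_fillsInterval {ι : Type*} [Fintype ι] [DecidableEq ι] (T : ι → ℤ) :
    ∃ S : Finset ι, FillsInterval T S ∧ ∀ i ∉ S, ∑ j ∈ S, T j + 2 ≤ T i := by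
  obtain ⟨S, hS⟩ := (Set.toFinite {S : Finset ι | FillsInterval T S}).exists_maximal
    ⟨∅, fun m h0 h1 => ⟨∅, by simp, by simp at h1 ⊢; omega⟩⟩
  refine ⟨S, hS.prop, fun i hi => ?_⟩
  by_contra! hlt
  exact hi (hS.le_of_ge (FillsInterval.insert hS.prop hi (by omega)) (Finset.subset_insert i S)
    (Finset.mem_insert_self i S))

theorem isOneSmooth_of_fillsInterval {ℓ : ℕ} {T : Fin ℓ → ℤ} (hpos : ∀ i, 1 ≤ T i)
    (h : FillsInterval T Finset.univ) : IsOneSmooth T := by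
  ext m
  simp only [Set.mem_ofPred_eq, Set.mem_Icc]
  constructor
  · rintro ⟨S, ⟨x, hx⟩, rfl⟩
    refine ⟨(hpos x).trans (Finset.single_le_sum (fun i _ => ?_) hx),
      Finset.sum_le_sum_of_subset_of_nonneg (Finset.subset_univ S) fun i _ _ => ?_⟩ <;>
    · have := hpos i
      omega
  · rintro ⟨h1, h2⟩
    obtain ⟨U, -, hU⟩ := h m (by omega) h2
    refine ⟨U, Finset.nonempty_iff_ne_empty.2 ?_, hU⟩
    rintro rfl
    simp at hU
    omega

theorem stmt5 {n ℓ : ℕ} (hn : 1 ≤ n) (hℓ : n ≤ ℓ) (T : Fin ℓ → ℤ)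
    (hpos : ∀ i, 1 ≤ T i) (hns : ¬ IsOneSmooth T) :
    ∃ K : Finset (Fin ℓ), K.Nonempty ∧ (n : ℤ) ∣ ∑ i ∈ K, T i ∧
      2 * (K.card : ℤ) ≤ ∑ i ∈ K, T i ∧ ℓ - (n - 1) ≤ K.card := by
  have : NeZero n := ⟨by omega⟩
  obtain ⟨S, hS, hbig⟩ := exists_maximal_fillsInterval T
  have hScard : (S.card : ℤ) ≤ ∑ j ∈ S, T j := by
    have := Finset.card_nsmul_le_sum S T 1 fun i _ => hpos i
    simpa using this
  have hSlt : S.card < ℓ := by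
    have hne : S ≠ Finset.univ := by
      rintro rfl
      exact hns (isOneSmooth_of_fillsInterval hpos hS)
    simpa using Finset.card_lt_card (Finset.ssubset_univ_iff.2 hne)
  have hcompl : S.card + Sᶜ.card = ℓ := by
    simp
  obtain ⟨K₀, -, ⟨x, hxK₀, hxS⟩, hK₀⟩ := exists_zero_sum_of_lt (n := n) T S Sᶜ
    disjoint_compl_right (by
      have := hS.le_card_subsetSumsMod (n := n) (k := min n (S.card + 1)) (min_le_left _ _) (by omega)
      omega)
  rw [Finset.mem_compl] at hxS
  obtain ⟨K, hK⟩ := (Set.toFinite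
    {K : Finset (Fin ℓ) | x ∈ K ∧ (n : ℤ) ∣ ∑ i ∈ K, T i}).exists_maximal ⟨K₀, hxK₀, hK₀⟩
  refine ⟨K, ⟨x, hK.prop.1⟩, hK.prop.2, two_mul_card_le hpos hbig ⟨x, hK.prop.1, hxS⟩, ?_⟩
  by_contra! hlt
  have hKc : K.card + Kᶜ.card = ℓ := by
    simp
  obtain ⟨U, hU, ⟨y, hyU, hyK⟩, hdvd⟩ := exists_zero_sum_of_lt (n := n) T ∅ Kᶜ
    (Finset.disjoint_empty_left _) (by
      have : (subsetSumsMod n T (∅ : Finset (Fin ℓ))).card = 1 := by simp [subsetSumsMod]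
      omega)
  rw [Finset.empty_union] at hU
  have hdisj : Disjoint K U := disjoint_compl_right.mono_right hU
  have hle := hK.le_of_ge (y := K ∪ U)
    ⟨Finset.mem_union_left _ hK.prop.1, by
      rw [Finset.sum_union hdisj]
      exact dvd_add hK.prop.2 hdvd⟩ Finset.subset_union_left
  exact Finset.mem_compl.1 hyK (hle (Finset.mem_union_right _ hyU))
end

section
/- Let G be an additive abelian group, let T : Fin ℓ → G be a sequence, and let r be an integer with 1 ≤ r ≤ ℓ − 1. For a subset I ⊆ Fin ℓ and signs ε : Fin ℓ → ℤ with ε i ∈ {1, −1} for all i, write N(I, ε) for the number of subsets S ⊆ I (including the empty set) with ∑_{i∈S} ε i • T i = 0. Suppose m ≥ 2 is such that N(I, ε) ≥ m for every subset I of size r and every sign function ε. Then N(I, ε) ≥ 2·m for every subset I of size r + 1 and every sign function ε. -/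
/-!
The zero-sum subsets of `I` that avoid a fixed `x ∈ I` number at least `m` by hypothesis, so it
suffices to find an `x` contained in at least `m` zero-sum subsets. As `m ≥ 2`, there is a nonempty
zero-sum subset `Z` of `I`; let `x ∈ Z`. Flipping the signs on `Z` gives a new sign function for
which `S` is zero-sum exactly when `S ∆ Z` is zero-sum for the old one. Hence `S ↦ S ∆ Z` sends
the at least `m` subsets of `I \ {x}` that are zero-sum for the new signs injectively to zero-sum
subsets of `I` containing `x`.
-/

/-- Taking the symmetric difference with a zero-sum set `Z` amounts to flipping the signs
on `Z`. -/
lemma sum_symmDiff_eq_sum_flip {ι G : Type*} [DecidableEq ι] [AddCommGroup G] (f : ι → G)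
    (S Z : Finset ι) (hZ : ∑ i ∈ Z, f i = 0) :
    ∑ i ∈ symmDiff S Z, f i = ∑ i ∈ S, if i ∈ Z then -f i else f i := by
  have h1 : ∑ i ∈ symmDiff S Z, f i = ∑ i ∈ S \ Z, f i + ∑ i ∈ Z \ S, f i := by
    rw [symmDiff_def, Finset.sup_eq_union, Finset.sum_union disjoint_sdiff_sdiff]
  have h2 : ∑ i ∈ Z ∩ S, f i + ∑ i ∈ Z \ S, f i = 0 := by
    rw [Finset.sum_inter_add_sum_sdiff, hZ]
  rw [h1, Finset.sum_ite, Finset.filter_mem_eq_inter, Finset.filter_notMem_eq_sdiff,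
    Finset.sum_neg_distrib, Finset.inter_comm S Z, eq_neg_of_add_eq_zero_right h2, add_comm]

theorem stmt6 {G : Type*} [AddCommGroup G] {ℓ : ℕ} (T : Fin ℓ → G)
    (r : ℕ) (hr1 : 1 ≤ r) (hrℓ : r + 1 ≤ ℓ) (m : ℕ) (hm : 2 ≤ m)
    (hyp : ∀ (I : Finset (Fin ℓ)) (ε : Fin ℓ → ℤ), I.card = r →
      (∀ i, ε i = 1 ∨ ε i = -1) →
      m ≤ Nat.card {S : Finset (Fin ℓ) // S ⊆ I ∧ ∑ i ∈ S, ε i • T i = 0}) :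
    ∀ (I : Finset (Fin ℓ)) (ε : Fin ℓ → ℤ), I.card = r + 1 →
      (∀ i, ε i = 1 ∨ ε i = -1) →
      2 * m ≤ Nat.card {S : Finset (Fin ℓ) // S ⊆ I ∧ ∑ i ∈ S, ε i • T i = 0} := by
  classical
  intro I ε hI hε
  obtain ⟨Z, hZne, hZI, hZ⟩ : ∃ Z : Finset (Fin ℓ), Z.Nonempty ∧ Z ⊆ I ∧
      ∑ i ∈ Z, ε i • T i = 0 := by
    obtain ⟨y, hy⟩ : I.Nonempty := Finset.card_pos.mp (by omega)
    have h := hyp (I.erase y) ε (by rw [Finset.card_erase_of_mem hy, hI]; rfl) hε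
    have : Nontrivial {S : Finset (Fin ℓ) // S ⊆ I.erase y ∧ ∑ i ∈ S, ε i • T i = 0} :=
      Finite.one_lt_card_iff_nontrivial.mp (by omega)
    obtain ⟨⟨Z, hZI, hZ⟩, hne⟩ := exists_ne
      (⟨∅, by simp⟩ : {S : Finset (Fin ℓ) // S ⊆ I.erase y ∧ ∑ i ∈ S, ε i • T i = 0})
    refine ⟨Z, Finset.nonempty_iff_ne_empty.mpr fun h0 => hne (Subtype.ext h0),
      hZI.trans (Finset.erase_subset _ _), hZ⟩
  obtain ⟨x, hx⟩ := hZne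
  have hcard : (I.erase x).card = r := by
    rw [Finset.card_erase_of_mem (hZI hx), hI]; rfl
  have h1 := hyp (I.erase x) ε hcard hε
  have h2 := hyp (I.erase x) (fun i => if i ∈ Z then -ε i else ε i) hcard (by
    intro i
    have := hε i
    split_ifs <;> omega)
  -- Subsets avoiding `x` are kept; those counted with flipped signs are sent to `S ∆ Z ∋ x`.
  let φ : {S : Finset (Fin ℓ) // S ⊆ I.erase x ∧ ∑ i ∈ S, ε i • T i = 0} ⊕
      {S : Finset (Fin ℓ) // S ⊆ I.erase x ∧
        ∑ i ∈ S, (if i ∈ Z then -ε i else ε i) • T i = 0} →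
      {S : Finset (Fin ℓ) // S ⊆ I ∧ ∑ i ∈ S, ε i • T i = 0} :=
    Sum.elim (fun S => ⟨S.1, S.2.1.trans (Finset.erase_subset _ _), S.2.2⟩)
      (fun S => ⟨symmDiff S.1 Z, by
        intro i hi
        rcases Finset.mem_symmDiff.mp hi with h | h
        · exact Finset.mem_of_mem_erase (S.2.1 h.1)
        · exact hZI h.1, by
        rw [sum_symmDiff_eq_sum_flip _ _ _ hZ]
        refine Eq.trans ?_ S.2.2
        refine Finset.sum_congr rfl fun i _ => ?_
        split_ifs <;> simp⟩)
  have hφ : Function.Injective φ := by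
    refine Function.Injective.sumElim ?_ ?_ ?_
    · intro A B h
      have hAB := congrArg Subtype.val h
      exact Subtype.ext hAB
    · intro A B h
      exact Subtype.ext (symmDiff_left_injective Z (congrArg Subtype.val h))
    · intro A B h
      have hAB : A.1 = symmDiff B.1 Z := congrArg Subtype.val h
      have hxA : x ∈ A.1 := by
        rw [hAB, Finset.mem_symmDiff]
        exact Or.inr ⟨hx, fun hB => Finset.notMem_erase x I (B.2.1 hB)⟩
      exact Finset.notMem_erase x I (A.2.1 hxA)
  have h3 := Nat.card_le_card_of_injective φ hφ
  rw [Nat.card_sum] at h3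
  omega
end

section
/- Let k, n ≥ 1 and let T : Fin ℓ → ℤ be a sequence with 1 ≤ T i ≤ k + n − 1 for every i. Then the number of nonempty subsets S ⊆ Fin ℓ such that n divides ∑_{i∈S} T i and ∑_{i∈S} T i ≥ ⌈k/n⌉·n is at least 2^(ℓ − ⌈k/n⌉·n + 1) − 1, where the exponent is interpreted via truncated (natural-number) subtraction. -/
/-!
Write `M = m * n` with `m = ⌈k / n⌉`; the bound is trivial unless `M ≤ ℓ`. In that case any `n`
terms contain a nonempty zero-sum (mod `n`) subsequence of length at most `n`
(`exists_zero_sum_subset`), so `m - 1` disjoint ones can be removed greedily. Their union `A`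
has at most `(m - 1) * n` terms, and its sum is divisible by `n` and, as all terms are positive,
at least `(m - 1) * n` (`exists_large_zero_sum_subset`). At least `ℓ - (m - 1) * n` terms remain,
so Olson's bound (`two_pow_le_card_zero_sum`) yields at least `2 ^ (ℓ + 1 - M) - 1` nonempty
zero-sum sets `B` disjoint from `A`. Each such `B` has sum at least `n`, so `A ∪ B` has sum
at least `M`, and the sets `A ∪ B` are distinct.

Olson's bound is proved by induction on the length: if `W` is a zero-sum set and `a ∈ W`, then
`S ↦ S ∆ W` turns the zero-sum sets containing `a` into those avoiding `a` for the sequence in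
which the terms of `W` have changed sign, and both families are counted by induction.
-/

open Finset symmDiff

/-- The Davenport constant of `ℤ/n` is at most `n`. This follows from the Erdős–Ginzburg–Ziv
theorem applied to the sequence with `n - 1` zeros appended. -/
lemma exists_zero_sum_subset {ι : Type*} {n : ℕ} (hn : 1 ≤ n) (f : ι → ℤ) (s : Finset ι)
    (hs : n ≤ #s) : ∃ t ⊆ s, t.Nonempty ∧ #t ≤ n ∧ (n : ℤ) ∣ ∑ i ∈ t, f i := by
  obtain ⟨t, hts, htc, htd⟩ := Int.erdos_ginzburg_ziv (n := n)
    (s := s.disjSum (univ : Finset (Fin (n - 1)))) (Sum.elim f (fun _ => 0))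
    (by simp only [card_disjSum, card_univ, Fintype.card_fin]; omega)
  have hcard := card_toLeft_add_card_toRight (u := t)
  have hright : #t.toRight ≤ n - 1 := by simpa using card_le_univ t.toRight
  refine ⟨t.toLeft, ?_, ?_, by omega, ?_⟩
  · intro x hx
    simpa using hts (mem_toLeft.1 hx)
  · exact card_pos.1 (by omega)
  · rw [← toLeft_disjSum_toRight (u := t), sum_disjSum] at htd
    simpa using htd

/-- Olson's lower bound for the number of zero-sum subsequences over `ℤ/n`, the empty one
included. -/
lemma two_pow_le_card_zero_sum {ι : Type*} [DecidableEq ι] {n : ℕ} (hn : 1 ≤ n) (c : ℕ) :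
    ∀ (f : ι → ℤ) (s : Finset ι), #s = c →
      2 ^ (c + 1 - n) ≤ #{S ∈ s.powerset | (n : ℤ) ∣ ∑ i ∈ S, f i} := by
  induction c with
  | zero =>
    intro f s hs
    have h0 : 0 + 1 - n = 0 := by omega
    rw [h0, pow_zero]
    exact card_pos.2 ⟨∅, by simp⟩
  | succ c ih =>
    intro f s hs
    rcases Nat.lt_or_ge (c + 1) n with h | h
    · have h0 : c + 1 + 1 - n = 0 := by omega
      rw [h0, pow_zero]
      exact card_pos.2 ⟨∅, by simp⟩
    obtain ⟨W, hWs, ⟨a, haW⟩, -, hWd⟩ := exists_zero_sum_subset hn f s (by omega)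
    have hce : #(s.erase a) = c := by rw [card_erase_of_mem (hWs haW)]; omega
    set g : ι → ℤ := fun i => if i ∈ W then -f i else f i with hg
    have h1 := ih f _ hce
    have h2 := ih g _ hce
    have key : ∀ S : Finset ι, ∑ i ∈ S ∆ W, f i = ∑ i ∈ S, g i + ∑ i ∈ W, f i := by
      intro S
      have e1 : ∑ i ∈ S ∆ W, f i = ∑ i ∈ S \ W, f i + ∑ i ∈ W \ S, f i := by
        rw [symmDiff_def, sup_eq_union, sum_union disjoint_sdiff_sdiff]
      have e2 : ∑ i ∈ S, g i = ∑ i ∈ S ∩ W, g i + ∑ i ∈ S \ W, g i :=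
        (sum_inter_add_sum_sdiff S W g).symm
      have e3 : ∑ i ∈ S ∩ W, g i = -∑ i ∈ W ∩ S, f i := by
        rw [inter_comm, ← sum_neg_distrib]
        exact sum_congr rfl fun i hi => by simp [hg, (mem_inter.1 hi).1]
      have e4 : ∑ i ∈ S \ W, g i = ∑ i ∈ S \ W, f i :=
        sum_congr rfl fun i hi => by simp [hg, (mem_sdiff.1 hi).2]
      have e5 := sum_inter_add_sum_sdiff W S f
      linarith
    set P := {S ∈ (s.erase a).powerset | (n : ℤ) ∣ ∑ i ∈ S, f i} with hP
    set Q := {S ∈ (s.erase a).powerset | (n : ℤ) ∣ ∑ i ∈ S, g i} with hQ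
    have hinj : #(Q.image (· ∆ W)) = #Q := card_image_of_injective _ (symmDiff_left_injective W)
    -- Members of `P` avoid `a`, while members of the image contain it.
    have hdisj : Disjoint P (Q.image (· ∆ W)) := by
      rw [disjoint_left]
      intro S hS hS'
      obtain ⟨R, hR, rfl⟩ := mem_image.1 hS'
      have ha1 : a ∉ R ∆ W := fun hh =>
        notMem_erase a s (mem_powerset.1 (mem_filter.1 hS).1 hh)
      have ha2 : a ∉ R := fun hh =>
        notMem_erase a s (mem_powerset.1 (mem_filter.1 hR).1 hh)
      exact ha1 (mem_symmDiff.2 (Or.inr ⟨haW, ha2⟩))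
    have hsub : P ∪ Q.image (· ∆ W) ⊆ {S ∈ s.powerset | (n : ℤ) ∣ ∑ i ∈ S, f i} := by
      intro S hS
      rcases mem_union.1 hS with hS | hS
      · obtain ⟨hS1, hS2⟩ := mem_filter.1 hS
        exact mem_filter.2
          ⟨mem_powerset.2 ((mem_powerset.1 hS1).trans (erase_subset _ _)), hS2⟩
      · obtain ⟨R, hR, rfl⟩ := mem_image.1 hS
        obtain ⟨hR1, hR2⟩ := mem_filter.1 hR
        refine mem_filter.2 ⟨mem_powerset.2 fun x hx => ?_, ?_⟩
        · rcases mem_symmDiff.1 hx with hx | hx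
          · exact mem_of_mem_erase (mem_powerset.1 hR1 hx.1)
          · exact hWs hx.1
        · show (n : ℤ) ∣ ∑ i ∈ R ∆ W, f i
          rw [key]
          exact dvd_add hR2 hWd
    have hle := card_le_card hsub
    rw [card_union_of_disjoint hdisj, hinj] at hle
    have hpow : 2 ^ (c + 1 + 1 - n) = 2 * 2 ^ (c + 1 - n) := by
      rw [← pow_succ']; congr 1; omega
    omega

/-- A nonempty zero-sum set of positive terms has sum at least `n`. -/
lemma le_sum_of_dvd {ι : Type*} {n : ℕ} {f : ι → ℤ} (hf : ∀ i, 1 ≤ f i) {t : Finset ι}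
    (ht : t.Nonempty) (hd : (n : ℤ) ∣ ∑ i ∈ t, f i) : (n : ℤ) ≤ ∑ i ∈ t, f i :=
  Int.le_of_dvd (sum_pos (fun i _ => by linarith [hf i]) ht) hd

lemma exists_large_zero_sum_subset {ι : Type*} [DecidableEq ι] {n : ℕ} (hn : 1 ≤ n)
    {f : ι → ℤ} (hf : ∀ i, 1 ≤ f i) (s : Finset ι) (m : ℕ) :
    m * n ≤ #s → ∃ A ⊆ s, #A ≤ m * n ∧ (n : ℤ) ∣ ∑ i ∈ A, f i ∧
      (m * n : ℤ) ≤ ∑ i ∈ A, f i := by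
  induction m with
  | zero => intro _; exact ⟨∅, by simp⟩
  | succ m ih =>
    intro hs
    rw [Nat.succ_mul] at hs
    obtain ⟨A, hAs, hAc, hAd, hAl⟩ := ih (by omega)
    have hc := card_sdiff_add_card_eq_card hAs
    obtain ⟨t, hts, htn, htc, htd⟩ := exists_zero_sum_subset hn f (s \ A) (by omega)
    have hdisj : Disjoint A t := disjoint_sdiff.mono_right hts
    refine ⟨A ∪ t, union_subset hAs (hts.trans sdiff_subset), ?_, ?_, ?_⟩
    · rw [card_union_of_disjoint hdisj, Nat.succ_mul]; omega
    · rw [sum_union hdisj]; exact dvd_add hAd htd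
    · rw [sum_union hdisj]
      have := le_sum_of_dvd hf htn htd
      push_cast
      linarith

theorem stmt7 {k n ℓ : ℕ} (hk : 1 ≤ k) (hn : 1 ≤ n) (T : Fin ℓ → ℤ)
    (hT : ∀ i, 1 ≤ T i ∧ T i ≤ (k : ℤ) + n - 1) :
    2 ^ (ℓ + 1 - (k + n - 1) / n * n) - 1 ≤
      Nat.card {S : Finset (Fin ℓ) // S.Nonempty ∧ (n : ℤ) ∣ ∑ i ∈ S, T i ∧
        (((k + n - 1) / n * n : ℕ) : ℤ) ≤ ∑ i ∈ S, T i} := by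
  classical
  have hf : ∀ i, 1 ≤ T i := fun i => (hT i).1
  have hm1 : 1 ≤ (k + n - 1) / n := (Nat.one_le_div_iff (by omega)).2 (by omega)
  obtain ⟨m, hm⟩ : ∃ m, (k + n - 1) / n = m + 1 := ⟨(k + n - 1) / n - 1, by omega⟩
  rw [hm]
  rcases Nat.lt_or_ge ℓ ((m + 1) * n) with h | h
  · have h0 : ℓ + 1 - (m + 1) * n = 0 := by omega
    simp [h0]
  rw [Nat.succ_mul] at h
  obtain ⟨A, -, hAc, hAd, hAl⟩ :=
    exists_large_zero_sum_subset hn hf univ m (by rw [card_univ, Fintype.card_fin]; omega)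
  have hcc : #(univ \ A) = ℓ - #A := by
    rw [card_sdiff_of_subset (subset_univ A), card_univ, Fintype.card_fin]
  have hol := two_pow_le_card_zero_sum hn _ T (univ \ A) hcc
  set P := {S ∈ (univ \ A).powerset | (n : ℤ) ∣ ∑ i ∈ S, T i} with hP
  have hempty : ∅ ∈ P := by simp [hP]
  have hdis : ∀ B ∈ P, Disjoint A B := fun B hB =>
    disjoint_sdiff.mono_right (mem_powerset.1 (mem_filter.1 hB).1)
  have hinj : Set.InjOn (A ∪ ·) (P.erase ∅ : Finset (Finset (Fin ℓ))) := by
    intro B hB C hC hBC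
    have hB' := hdis B (mem_of_mem_erase hB)
    have hC' := hdis C (mem_of_mem_erase hC)
    rw [← union_sdiff_cancel_left hB', ← union_sdiff_cancel_left hC']
    exact congrArg (· \ A) hBC
  rw [Nat.card_eq_fintype_card, Fintype.card_subtype]
  calc 2 ^ (ℓ + 1 - (m + 1) * n) - 1 ≤ 2 ^ (ℓ - #A + 1 - n) - 1 := by
        refine Nat.sub_le_sub_right (Nat.pow_le_pow_right (by norm_num) ?_) 1
        rw [Nat.succ_mul]; omega
    _ ≤ #P - 1 := Nat.sub_le_sub_right hol 1
    _ = #((P.erase ∅).image (A ∪ ·)) := by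
        rw [card_image_of_injOn hinj, card_erase_of_mem hempty]
    _ ≤ _ := by
        refine card_le_card fun S hS => ?_
        obtain ⟨B, hB, rfl⟩ := mem_image.1 hS
        obtain ⟨hB0, hBP⟩ := mem_erase.1 hB
        have hBn : B.Nonempty := nonempty_iff_ne_empty.2 hB0
        have hBd := (mem_filter.1 hBP).2
        refine mem_filter.2 ⟨mem_univ _, hBn.mono subset_union_right, ?_, ?_⟩
        · rw [sum_union (hdis B hBP)]; exact dvd_add hAd hBd
        · rw [sum_union (hdis B hBP)]
          have := le_sum_of_dvd hf hBn hBd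
          push_cast
          linarith
end

section
/- Let 1 ≤ k ≤ n, let δ be an integer with 1 ≤ δ ≤ ⌈n/2⌉ − 1, and let T : Fin ℓ → ℤ satisfy 1 ≤ T i ≤ k + n − 1 for every i. Let M be the number of nonempty subsets S ⊆ Fin ℓ with n ∣ ∑_{i∈S} T i. If M < 2^(ℓ − n + 1 + δ) − 1 (exponent via truncated natural-number subtraction), then there exist a subset I ⊆ Fin ℓ with |I| = n − δ, signs ε : Fin ℓ → ℤ with ε i ∈ {1, −1}, an element g of ZMod n of additive order n, and positive integers m i (i ∈ I) such that: the image of ε i · T i in ZMod n equals m i • g for every i ∈ I, ∑_{i∈I} m i < n, and the sequence (m i)_{i∈I} of positive integers is 1-smooth. (That is, the sequence of residues (T i mod n)_{i∈I} in ZMod n is signed g-smooth.) -/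
/-! ### Counting zero-sum subsequences up to signs -/

section Counting

variable {ι G : Type*} [DecidableEq ι] [AddCommGroup G]

/-- Translating subsets by `C` under symmetric difference corresponds to flipping the signs of
the terms indexed by `C`. -/
lemma sum_symmDiff_flip (b : ι → G) (S C : Finset ι) :
    ∑ i ∈ symmDiff S C, b i = ∑ i ∈ S, (if i ∈ C then - b i else b i) + ∑ i ∈ C, b i := by
  have h1 : ∑ i ∈ symmDiff S C, b i = ∑ i ∈ S \ C, b i + ∑ i ∈ C \ S, b i := by
    rw [symmDiff_def, Finset.sup_eq_union, Finset.sum_union]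
    exact disjoint_sdiff_sdiff
  have h2 := Finset.sum_inter_add_sum_sdiff S C (fun i => if i ∈ C then - b i else b i)
  have h3 := Finset.sum_inter_add_sum_sdiff C S b
  have h4 : ∑ i ∈ S ∩ C, (if i ∈ C then - b i else b i) = - ∑ i ∈ C ∩ S, b i := by
    rw [Finset.inter_comm, ← Finset.sum_neg_distrib]
    exact Finset.sum_congr rfl fun i hi => if_pos (Finset.mem_inter.1 hi).1
  have h5 : ∑ i ∈ S \ C, (if i ∈ C then - b i else b i) = ∑ i ∈ S \ C, b i :=
    Finset.sum_congr rfl fun i hi => if_neg (Finset.mem_sdiff.1 hi).2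
  rw [h1, ← h2, ← h3, h4, h5]
  abel

variable [DecidableEq G]

/-- If no signed subsequence of length `D` is zero-sum free, then there are many zero-sum
subsequences. -/
lemma two_pow_le_card_zeroSums (a : ι → G) (D : ℕ) (J : Finset ι)
    (H : ∀ C ⊆ J, C.card = D → ∀ ε : ι → ℤ, (∀ i, ε i = 1 ∨ ε i = -1) →
      ∃ S ⊆ C, S.Nonempty ∧ ∑ i ∈ S, ε i • a i = 0)
    (ε : ι → ℤ) (hε : ∀ i, ε i = 1 ∨ ε i = -1) :
    2 ^ (J.card + 1 - D) ≤ (J.powerset.filter (fun S => ∑ i ∈ S, ε i • a i = 0)).card := by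
  induction J using Finset.strongInduction generalizing ε with
  | H J ih =>
    rcases lt_or_ge J.card D with hJ | hJ
    · rw [show J.card + 1 - D = 0 by omega, pow_zero, Nat.one_le_iff_ne_zero,
        Finset.card_ne_zero]
      exact ⟨∅, by simp⟩
    · obtain ⟨C, hCJ, hC⟩ := Finset.exists_subset_card_eq hJ
      obtain ⟨S, hSC, ⟨x, hx⟩, hS⟩ := H C hCJ hC ε hε
      have hxJ : x ∈ J := hCJ (hSC hx)
      have hlt : J.erase x ⊂ J := Finset.erase_ssubset hxJ
      have ih' := ih (J.erase x) hlt
        (fun C' hC' => H C' (hC'.trans (Finset.erase_subset _ _)))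
      set R := S.erase x with hR
      let ε' : ι → ℤ := fun i => if i ∈ R then - ε i else ε i
      have hε' : ∀ i, ε' i = 1 ∨ ε' i = -1 := by
        intro i
        rcases hε i with h | h <;> by_cases hi : i ∈ R <;> simp [ε', hi, h]
      have c1 := ih' ε hε
      have c2 := ih' ε' hε'
      set Z1 := (J.erase x).powerset.filter (fun S => ∑ i ∈ S, ε i • a i = 0) with hZ1
      set Z2 := (J.erase x).powerset.filter (fun S => ∑ i ∈ S, ε' i • a i = 0) with hZ2
      have hxR : x ∉ R := Finset.notMem_erase x S
      have hmem2 : ∀ U ∈ Z2, U ⊆ J.erase x ∧ ∑ i ∈ U, ε' i • a i = 0 := by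
        intro U hU
        simpa [hZ2] using hU
      have hxsd : ∀ U ∈ Z2, x ∉ symmDiff U R := by
        intro U hU h
        have := (hmem2 U hU).1
        rcases Finset.mem_symmDiff.1 h with h | h
        · exact Finset.notMem_erase x J (this h.1)
        · exact hxR h.1
      have hsub : Z1 ∪ Z2.image (fun U => insert x (symmDiff U R)) ⊆
          J.powerset.filter (fun S => ∑ i ∈ S, ε i • a i = 0) := by
        intro V hV
        rw [Finset.mem_filter, Finset.mem_powerset]
        rcases Finset.mem_union.1 hV with hV | hV
        · rw [hZ1, Finset.mem_filter, Finset.mem_powerset] at hV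
          exact ⟨hV.1.trans (Finset.erase_subset _ _), hV.2⟩
        · obtain ⟨U, hU, rfl⟩ := Finset.mem_image.1 hV
          constructor
          · intro i hi
            rcases Finset.mem_insert.1 hi with rfl | hi
            · exact hxJ
            · rcases Finset.mem_symmDiff.1 hi with h | h
              · exact Finset.mem_of_mem_erase ((hmem2 U hU).1 h.1)
              · exact hCJ (hSC (Finset.mem_of_mem_erase h.1))
          · rw [Finset.sum_insert (hxsd U hU), sum_symmDiff_flip]
            have e : ∑ i ∈ U, (if i ∈ R then -(ε i • a i) else ε i • a i) = 0 := by
              rw [← (hmem2 U hU).2]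
              refine Finset.sum_congr rfl fun i _ => ?_
              by_cases hi : i ∈ R <;> simp [ε', hi]
            rw [e, zero_add, hR, Finset.add_sum_erase S (fun i => ε i • a i) hx, hS]
      have hdisj : Disjoint Z1 (Z2.image (fun U => insert x (symmDiff U R))) := by
        rw [Finset.disjoint_left]
        intro V hV hV'
        obtain ⟨U, hU, rfl⟩ := Finset.mem_image.1 hV'
        rw [hZ1, Finset.mem_filter, Finset.mem_powerset] at hV
        exact Finset.notMem_erase x J (hV.1 (Finset.mem_insert_self _ _))
      have hinj : (Z2.image (fun U => insert x (symmDiff U R))).card = Z2.card := by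
        apply Finset.card_image_of_injOn
        intro U hU V hV hUV
        have h1 := congrArg (fun W => Finset.erase W x) hUV
        simp only [Finset.erase_insert (hxsd U hU), Finset.erase_insert (hxsd V hV)] at h1
        exact symmDiff_left_injective R h1
      have hcard := Finset.card_le_card hsub
      rw [Finset.card_union_of_disjoint hdisj, hinj] at hcard
      have hJ' : (J.erase x).card + 1 = J.card := Finset.card_erase_add_one hxJ
      rw [show J.card + 1 - D = ((J.erase x).card + 1 - D) + 1 by omega, pow_succ]
      omega

end Counting

/-! ### Zero-sum free sequences with few subset sums -/

section Structure

variable {ι G : Type*} [DecidableEq ι] [AddCommGroup G] [DecidableEq G]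

set_option linter.unusedSectionVars false

/-- The set of all subset sums of `(a i)`, `i ∈ I`, including the empty sum. -/
def subsetSums (a : ι → G) (I : Finset ι) : Finset G :=
  I.powerset.image (fun S => ∑ i ∈ S, a i)

lemma mem_subsetSums {a : ι → G} {I : Finset ι} {b : G} :
    b ∈ subsetSums a I ↔ ∃ S ⊆ I, ∑ i ∈ S, a i = b := by
  simp [subsetSums]

/-- No nonempty subsequence of `(a i)`, `i ∈ I`, sums to zero. -/
def ZeroSumFree (a : ι → G) (I : Finset ι) : Prop :=
  ∀ S ⊆ I, S.Nonempty → ∑ i ∈ S, a i ≠ 0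

/-- `a i = m i • g` on `I`, with positive natural numbers `m i` whose subset sums fill the
interval from `0` to the total. -/
def IsSmoothWith (a : ι → G) (I : Finset ι) (g : G) (m : ι → ℕ) : Prop :=
  (∀ i ∈ I, 0 < m i) ∧ (∀ i ∈ I, a i = m i • g) ∧
    ∀ v ≤ ∑ i ∈ I, m i, ∃ S ⊆ I, ∑ i ∈ S, m i = v

lemma IsSmoothWith.sum_eq {a : ι → G} {I : Finset ι} {g : G} {m : ι → ℕ}
    (h : IsSmoothWith a I g m) {S : Finset ι} (hS : S ⊆ I) :
    ∑ i ∈ S, a i = (∑ i ∈ S, m i) • g := by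
  rw [Finset.sum_smul]
  exact Finset.sum_congr rfl fun i hi => h.2.1 i (hS hi)

lemma IsSmoothWith.smul_ne_zero {a : ι → G} {I : Finset ι} {g : G} {m : ι → ℕ}
    (h : IsSmoothWith a I g m) (hz : ZeroSumFree a I) {v : ℕ} (hv : 0 < v)
    (hv' : v ≤ ∑ i ∈ I, m i) : v • g ≠ 0 := by
  obtain ⟨S, hS, rfl⟩ := h.2.2 v hv'
  rw [← h.sum_eq hS]
  apply hz S hS
  rw [Finset.nonempty_iff_ne_empty]
  rintro rfl
  simp at hv

lemma IsSmoothWith.mem_iff {a : ι → G} {I : Finset ι} {g : G} {m : ι → ℕ}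
    (h : IsSmoothWith a I g m) {b : G} :
    b ∈ subsetSums a I ↔ ∃ v ≤ ∑ i ∈ I, m i, v • g = b := by
  rw [mem_subsetSums]
  constructor
  · rintro ⟨S, hS, rfl⟩
    exact ⟨_, Finset.sum_le_sum_of_subset hS, (h.sum_eq hS).symm⟩
  · rintro ⟨v, hv, rfl⟩
    obtain ⟨S, hS, rfl⟩ := h.2.2 v hv
    exact ⟨S, hS, h.sum_eq hS⟩

lemma IsSmoothWith.card_subsetSums {a : ι → G} {I : Finset ι} {g : G} {m : ι → ℕ}
    (h : IsSmoothWith a I g m) (hz : ZeroSumFree a I) :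
    (subsetSums a I).card = ∑ i ∈ I, m i + 1 := by
  have e : subsetSums a I = (Finset.range (∑ i ∈ I, m i + 1)).image (fun v => v • g) := by
    ext b
    rw [h.mem_iff]
    simp
  rw [e, Finset.card_image_of_injOn, Finset.card_range]
  have key : ∀ u v : ℕ, u < v → v ≤ ∑ i ∈ I, m i → u • g ≠ v • g := by
    intro u v huv hv heq
    apply h.smul_ne_zero hz (v := v - u) (by omega) (by omega)
    have : v • g = (v - u) • g + u • g := by rw [← add_smul]; congr 1; omega
    rw [this] at heq
    simpa using heq
  intro u hu v hv huv
  simp only [Finset.coe_range, Set.mem_Iio] at hu hv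
  rcases lt_trichotomy u v with hlt | heq | hlt
  · exact absurd huv (key u v hlt (by omega))
  · exact heq
  · exact absurd huv.symm (key v u hlt (by omega))

lemma subsetSums_eq_union {a : ι → G} {I : Finset ι} {x : ι} (hx : x ∈ I) :
    subsetSums a I =
      subsetSums a (I.erase x) ∪ (subsetSums a (I.erase x)).image (fun b => b + a x) := by
  ext b
  simp only [Finset.mem_union, Finset.mem_image, mem_subsetSums]
  constructor
  · rintro ⟨S, hS, rfl⟩
    by_cases hxS : x ∈ S
    · exact Or.inr ⟨_, ⟨S.erase x, Finset.erase_subset_erase x hS, rfl⟩,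
        Finset.sum_erase_add S a hxS⟩
    · exact Or.inl ⟨S, Finset.subset_erase.2 ⟨hS, hxS⟩, rfl⟩
  · rintro (⟨S, hS, rfl⟩ | ⟨_, ⟨S, hS, rfl⟩, rfl⟩)
    · exact ⟨S, hS.trans (Finset.erase_subset _ _), rfl⟩
    · obtain ⟨hS1, hS2⟩ := Finset.subset_erase.1 hS
      exact ⟨insert x S, Finset.insert_subset hx hS1, by rw [Finset.sum_insert hS2, add_comm]⟩

/-- In a zero-sum free sequence the total sum is not attained after removing a term. -/
lemma ZeroSumFree.sum_notMem {a : ι → G} {I : Finset ι} (hz : ZeroSumFree a I) {x : ι}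
    (hx : x ∈ I) : ∑ i ∈ I, a i ∉ subsetSums a (I.erase x) := by
  rw [mem_subsetSums]
  rintro ⟨S, hS, h⟩
  obtain ⟨hS1, hS2⟩ := Finset.subset_erase.1 hS
  apply hz (I \ S) Finset.sdiff_subset ⟨x, Finset.mem_sdiff.2 ⟨hx, hS2⟩⟩
  have := Finset.sum_sdiff (f := a) hS1
  rw [h] at this
  simpa using this

/-- If removing any single term of a zero-sum free sequence loses no subset sum except the
total, then all terms are equal. -/
lemma ZeroSumFree.all_eq {a : ι → G} {I : Finset ι} (hz : ZeroSumFree a I)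
    (h : ∀ x ∈ I, ∀ b ∈ subsetSums a I, b ≠ ∑ i ∈ I, a i → b ∈ subsetSums a (I.erase x)) :
    ∀ x ∈ I, ∀ y ∈ I, a x = a y := by
  have hadd : ∀ x ∈ I, ∀ b ∈ subsetSums a (I.erase x), b + a x ∈ subsetSums a I := by
    intro x hx b hb
    rw [subsetSums_eq_union hx]
    exact Finset.mem_union_right _ (Finset.mem_image_of_mem _ hb)
  have key : ∀ x ∈ I, ∀ y ∈ I, a x ≠ a y → ∑ i ∈ I, a i = - a y := by
    intro x hx y hy hxy
    set σ := ∑ i ∈ I, a i with hσ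
    have h1 : σ - a x ∈ subsetSums a I :=
      mem_subsetSums.2 ⟨I.erase x, Finset.erase_subset _ _,
        by rw [hσ, ← Finset.sum_erase_add I a hx]; abel⟩
    have hx0 : a x ≠ 0 := by
      simpa using hz {x} (by simpa using hx) (by simp)
    have h2 : σ - a x ∈ subsetSums a (I.erase y) := h y hy _ h1 (by simpa using hx0)
    have h3 : σ - a x + a y ∈ subsetSums a I := hadd y hy _ h2
    have h4 : σ - a x + a y ≠ σ := by
      intro e
      apply hxy
      have : a y - a x = 0 := by
        calc a y - a x = (σ - a x + a y) - σ := by abel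
          _ = 0 := by rw [e, sub_self]
      exact (sub_eq_zero.1 this).symm
    have h5 : σ + a y ∈ subsetSums a I := by
      have := hadd x hx _ (h x hx _ h3 h4)
      convert this using 1
      abel
    -- complements: `σ - (σ + a y) = -a y` is a subset sum as well
    have h6 : - a y ∈ subsetSums a I := by
      obtain ⟨S, hS, e⟩ := mem_subsetSums.1 h5
      refine mem_subsetSums.2 ⟨I \ S, Finset.sdiff_subset, ?_⟩
      have := Finset.sum_sdiff (f := a) hS
      rw [e, ← hσ] at this
      have e2 : ∑ i ∈ I \ S, a i = σ - (σ + a y) := eq_sub_of_add_eq this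
      rw [e2]
      abel
    by_contra hne
    obtain ⟨S, hS, e⟩ := mem_subsetSums.1 (h y hy _ h6 (Ne.symm hne))
    obtain ⟨hS1, hS2⟩ := Finset.subset_erase.1 hS
    apply hz (insert y S) (Finset.insert_subset hy hS1) (Finset.insert_nonempty _ _)
    rw [Finset.sum_insert hS2, e, add_neg_cancel]
  intro x hx y hy
  by_contra hxy
  have e1 := key x hx y hy hxy
  have e2 := key y hy x hx (Ne.symm hxy)
  rw [e1] at e2
  exact hxy (neg_injective e2).symm

/-- Adding to a smooth sequence a term whose translate of the progression of subset sums meets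
the progression itself gives a smooth sequence. -/
lemma IsSmoothWith.extend {a : ι → G} {I : Finset ι} (hz : ZeroSumFree a I) {x : ι} (hx : x ∈ I)
    {g : G} {m : ι → ℕ} (h : IsSmoothWith a (I.erase x) g m) {p q : ℕ}
    (hp : p ≤ ∑ i ∈ I.erase x, m i) (hq : q ≤ ∑ i ∈ I.erase x, m i)
    (hpq : q • g + a x = p • g) : ∃ m', IsSmoothWith a I g m' := by
  rcases le_or_gt p q with hle | hlt
  · exfalso
    obtain ⟨S, hS, e⟩ := h.2.2 (q - p) (by omega)
    obtain ⟨hS1, hS2⟩ := Finset.subset_erase.1 hS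
    apply hz (insert x S) (Finset.insert_subset hx hS1) (Finset.insert_nonempty _ _)
    rw [Finset.sum_insert hS2, h.sum_eq hS, e]
    have : q • g = (q - p) • g + p • g := by rw [← add_smul]; congr 1; omega
    rw [this] at hpq
    apply add_right_cancel (b := p • g)
    rw [zero_add, show a x + (q - p) • g + p • g = (q - p) • g + p • g + a x by abel, hpq]
  · have hax : a x = (p - q) • g := by
      have : p • g = q • g + (p - q) • g := by rw [← add_smul]; congr 1; omega
      rw [this] at hpq
      exact add_left_cancel hpq
    have hne : ∀ S ⊆ I.erase x,
        ∑ i ∈ S, Function.update m x (p - q) i = ∑ i ∈ S, m i := by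
      intro S hS
      refine Finset.sum_congr rfl fun i hi => ?_
      exact Function.update_of_ne (Finset.ne_of_mem_erase (hS hi)) _ _
    refine ⟨Function.update m x (p - q), ?_, ?_, ?_⟩
    · intro i hi
      by_cases hix : i = x
      · subst hix
        simpa using hlt
      · rw [Function.update_of_ne hix]
        exact h.1 i (Finset.mem_erase.2 ⟨hix, hi⟩)
    · intro i hi
      by_cases hix : i = x
      · subst hix
        simpa using hax
      · rw [Function.update_of_ne hix]
        exact h.2.1 i (Finset.mem_erase.2 ⟨hix, hi⟩)
    · intro v hv
      rw [← Finset.sum_erase_add I _ hx, hne _ (Finset.Subset.refl _),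
        Function.update_self] at hv
      rcases le_or_gt v (∑ i ∈ I.erase x, m i) with hvM | hvM
      · obtain ⟨S, hS, e⟩ := h.2.2 v hvM
        exact ⟨S, hS.trans (Finset.erase_subset _ _), by rw [hne S hS, e]⟩
      · obtain ⟨S, hS, e⟩ := h.2.2 (v - (p - q)) (by omega)
        obtain ⟨hS1, hS2⟩ := Finset.subset_erase.1 hS
        refine ⟨insert x S, Finset.insert_subset hx hS1, ?_⟩
        rw [Finset.sum_insert hS2, hne S hS, e, Function.update_self]
        omega

/-- A zero-sum free sequence with few subset sums is smooth. -/
theorem exists_smooth (a : ι → G) (I : Finset ι) (hz : ZeroSumFree a I)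
    (hc : (subsetSums a I).card + 1 ≤ 2 * I.card) : ∃ g m, IsSmoothWith a I g m := by
  induction I using Finset.strongInduction with
  | H I ih =>
    by_cases hbig : ∃ x ∈ I, (subsetSums a (I.erase x)).card + 2 ≤ (subsetSums a I).card
    · obtain ⟨x, hx, hcx⟩ := hbig
      have hIx := Finset.card_erase_add_one hx
      have hz' : ZeroSumFree a (I.erase x) :=
        fun S hS => hz S (hS.trans (Finset.erase_subset _ _))
      obtain ⟨g, m, hm⟩ := ih (I.erase x) (Finset.erase_ssubset hx) hz' (by omega)
      have hcard := hm.card_subsetSums hz'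
      have hM : (I.erase x).card ≤ ∑ i ∈ I.erase x, m i := by
        simpa using Finset.card_nsmul_le_sum (I.erase x) m 1 (fun i hi => hm.1 i hi)
      -- a disjoint translate would give at least `2 * I.card` subset sums
      have hnd : ¬ Disjoint (subsetSums a (I.erase x))
          ((subsetSums a (I.erase x)).image (fun b => b + a x)) := by
        intro hd
        have e := congrArg Finset.card (subsetSums_eq_union (a := a) hx)
        rw [Finset.card_union_of_disjoint hd,
          Finset.card_image_of_injective _ (add_left_injective (a x))] at e
        omega
      obtain ⟨b, hb, hb'⟩ := Finset.not_disjoint_iff.1 hnd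
      obtain ⟨c, hcm, rfl⟩ := Finset.mem_image.1 hb'
      obtain ⟨p, hp, e1⟩ := hm.mem_iff.1 hb
      obtain ⟨q, hq, rfl⟩ := hm.mem_iff.1 hcm
      exact ⟨g, hm.extend hz hx hp hq e1.symm⟩
    · push Not at hbig
      have hall : ∀ x ∈ I, ∀ y ∈ I, a x = a y := by
        apply hz.all_eq
        intro x hx b hb hbσ
        have hsub : subsetSums a (I.erase x) ⊆ (subsetSums a I).erase (∑ i ∈ I, a i) := by
          rw [Finset.subset_erase]
          refine ⟨?_, hz.sum_notMem hx⟩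
          rw [subsetSums_eq_union hx]
          exact Finset.subset_union_left
        have hσ : ∑ i ∈ I, a i ∈ subsetSums a I :=
          mem_subsetSums.2 ⟨I, Finset.Subset.refl _, rfl⟩
        have e := Finset.card_erase_add_one hσ
        have := hbig x hx
        rw [Finset.eq_of_subset_of_card_le hsub (by omega)]
        exact Finset.mem_erase.2 ⟨hbσ, hb⟩
      have hne : I.Nonempty := by
        rw [← Finset.card_pos]
        omega
      obtain ⟨x, hx⟩ := hne
      refine ⟨a x, fun _ => 1, fun _ _ => one_pos, fun i hi => ?_, fun v hv => ?_⟩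
      · rw [one_smul]
        exact hall i hi x hx
      · obtain ⟨S, hS, e⟩ := Finset.exists_subset_card_eq (s := I) (n := v) (by simpa using hv)
        exact ⟨S, hS, by simpa using e⟩

end Structure

/-! ### Long zero-sum free sequences in `ZMod n` -/

theorem stmt9 {k n ℓ : ℕ} (hk : 1 ≤ k) (hkn : k ≤ n) (δ : ℕ) (hδ1 : 1 ≤ δ)
    (hδ2 : δ ≤ (n + 1) / 2 - 1) (T : Fin ℓ → ℤ)
    (hT : ∀ i, 1 ≤ T i ∧ T i ≤ (k : ℤ) + n - 1)
    (hM : Nat.card {S : Finset (Fin ℓ) // S.Nonempty ∧ (n : ℤ) ∣ ∑ i ∈ S, T i}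
      < 2 ^ (ℓ + 1 + δ - n) - 1) :
    ∃ I : Finset (Fin ℓ), I.card = n - δ ∧
      ∃ ε : Fin ℓ → ℤ, (∀ i, ε i = 1 ∨ ε i = -1) ∧
      ∃ g : ZMod n, addOrderOf g = n ∧
      ∃ m : Fin ℓ → ℤ, (∀ i ∈ I, 1 ≤ m i) ∧
        (∀ i ∈ I, ((ε i * T i : ℤ) : ZMod n) = m i • g) ∧
        (∑ i ∈ I, m i) < (n : ℤ) ∧ IsOneSmoothOn m I := by
  classical
  have : NeZero n := ⟨by omega⟩
  let a : Fin ℓ → ZMod n := fun i => (T i : ZMod n)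
  -- a signed zero-sum free subsequence of length `n - δ`
  obtain ⟨I, hI, ε, hε, hz⟩ : ∃ I : Finset (Fin ℓ), I.card = n - δ ∧
      ∃ ε : Fin ℓ → ℤ, (∀ i, ε i = 1 ∨ ε i = -1) ∧
        ZeroSumFree (fun i => ε i • a i) I := by
    by_contra hcon
    have hcount := two_pow_le_card_zeroSums a (n - δ) Finset.univ (by
      intro C _ hC ε hε
      by_contra hno
      exact hcon ⟨C, hC, ε, hε, fun S hS hne h0 => hno ⟨S, hS, hne, h0⟩⟩)
      (fun _ => 1) (fun _ => Or.inl rfl)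
    have hset : (Finset.univ.powerset.filter
        (fun S : Finset (Fin ℓ) => ∑ i ∈ S, (1 : ℤ) • a i = 0)) =
        insert ∅ (Finset.univ.filter
          (fun S : Finset (Fin ℓ) => S.Nonempty ∧ (n : ℤ) ∣ ∑ i ∈ S, T i)) := by
      ext S
      have hS : ∑ i ∈ S, a i = 0 ↔ (n : ℤ) ∣ ∑ i ∈ S, T i := by
        rw [← ZMod.intCast_zmod_eq_zero_iff_dvd]
        push_cast
        rfl
      rcases S.eq_empty_or_nonempty with rfl | hne
      · simp
      · simp [hne, hS, hne.ne_empty]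
    rw [hset, Finset.card_insert_of_notMem (by simp), Finset.card_univ, Fintype.card_fin,
      show ℓ + 1 - (n - δ) = ℓ + 1 + δ - n by omega] at hcount
    rw [Nat.card_eq_fintype_card, Fintype.card_subtype] at hM
    omega
  have hcard : (subsetSums (fun i => ε i • a i) I).card ≤ n := by
    simpa [ZMod.card] using Finset.card_le_univ (subsetSums (fun i => ε i • a i) I)
  obtain ⟨g, m, hm⟩ := exists_smooth _ I hz (by omega)
  have hMn := hm.card_subsetSums hz
  have hMI : I.card ≤ ∑ i ∈ I, m i := by
    simpa using Finset.card_nsmul_le_sum I m 1 (fun i hi => hm.1 i hi)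
  refine ⟨I, hI, ε, hε, g, ?_, fun i => (m i : ℤ), ?_, ?_, ?_, ?_⟩
  · -- a proper divisor of `n` is at most `n / 2 < ∑ m i`, so it does not annihilate `g`
    obtain ⟨c, hc⟩ : addOrderOf g ∣ n := by
      simpa [ZMod.card] using addOrderOf_dvd_card (x := g)
    by_contra hne
    have hpos : 0 < addOrderOf g := addOrderOf_pos g
    have hc2 : 2 ≤ c := by
      rcases c with _ | _ | c
      · omega
      · exact absurd (by simpa using hc.symm) hne
      · omega
    have hle : addOrderOf g * 2 ≤ n := by
      calc addOrderOf g * 2 ≤ addOrderOf g * c := Nat.mul_le_mul_left _ hc2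
        _ = n := hc.symm
    exact hm.smul_ne_zero hz hpos (by omega) (addOrderOf_nsmul_eq_zero g)
  · intro i hi
    exact Int.natCast_pos.2 (hm.1 i hi)
  · intro i hi
    have := hm.2.1 i hi
    simp only [a, zsmul_eq_mul] at this
    rw [natCast_zsmul, ← this]
    push_cast
    rfl
  · have : ∑ i ∈ I, m i < n := by omega
    simpa only [← Nat.cast_sum, Nat.cast_lt] using this
  · ext s
    simp only [Set.mem_ofPred_eq, Set.mem_Icc, ← Nat.cast_sum]
    constructor
    · rintro ⟨S, hS, hne, rfl⟩
      have h1 : 0 < ∑ i ∈ S, m i := Finset.sum_pos (fun i hi => hm.1 i (hS hi)) hne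
      have h2 : ∑ i ∈ S, m i ≤ ∑ i ∈ I, m i := Finset.sum_le_sum_of_subset hS
      omega
    · rintro ⟨h1, h2⟩
      obtain ⟨S, hS, e⟩ := hm.2.2 s.toNat (by omega)
      refine ⟨S, hS, ?_, by omega⟩
      rw [Finset.nonempty_iff_ne_empty]
      rintro rfl
      rw [Finset.sum_empty] at e
      omega
end

section
/- Let k > n ≥ 1 and let δ ≥ 1 be an integer with 2δ + 3n ≤ 2·⌈(⌈k/n⌉·n)/2⌉ (i.e., δ ≤ ⌈(⌈k/n⌉ n)/2⌉ − 3n/2). Let T : Fin ℓ → ℤ satisfy 1 ≤ T i ≤ k + n − 1 for every i, and let M be the number of nonempty subsets S ⊆ Fin ℓ with n ∣ ∑_{i∈S} T i and ∑_{i∈S} T i ≥ ⌈k/n⌉·n. If M < 2^(ℓ − ⌈k/n⌉·n + 1 + δ) − 1 (exponent via truncated natural-number subtraction), then ∑_{i} (T i − 1) ≤ δ − 1; in particular, the number of indices i with T i ≥ 2 is at most δ − 1 and all other terms equal 1. -/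
/-!
Write `L = ⌈k/n⌉ n`, `σ(S) = ∑_{i ∈ S} T i`, and suppose `∑ (T i - 1) ≥ δ`. The claim is that at
least `2 ^ (t + 1) - 1` sets `S` have `n ∣ σ(S) ≥ L`, where `t = ℓ + δ - L`; if `ℓ + δ < L` this
bound is `0`. Two cases are distinguished by the number of terms equal to `1`.

* At least `n - 1` ones (`count_many_ones`). Choose a set `Y` of `L - δ - 1` indices which contains
  a set `P` of `n - 1` ones and satisfies `∑_{i ∈ Y} (T i - 1) ≥ δ`; at most `δ` terms are needed
  for the latter. Its complement `X` has `t + 1` elements. For every proper subset `A` of `X`, the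
  complement of `A` has sum at least `σ(Y) + 1 ≥ L`, and deleting from it a suitable number (less
  than `n`) of elements of `P` makes the sum divisible by `n` while keeping it at least `L`.
  Distinct `A` give distinct sets.

* At most `n - 2` ones (`count_few_ones`). Some `Z` with fewer than `n` elements has
  `σ(Z) ≡ σ(univ)` modulo `n`. Enlarge `Z` to `W` with `t + n` elements. By Olson's bound
  (`olson_bound`), at least `2 ^ (t + 1)` subsets `R` of `W` satisfy `σ(R) ≡ σ(univ)`. The complement
  of each such `R` has sum divisible by `n`, and it contains the complement of `W`, which has
  `L - δ - n` elements, at most `n - 2` of them ones, and hence sum at least `L`.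
-/

/-- The Davenport constant of `ℤ/n` is at most `n`. -/
lemma exists_zero_sum_s10 {ι : Type*} {n : ℕ} (hn : 1 ≤ n) (W : Finset ι)
    (hW : n ≤ W.card) (g : ι → ℤ) :
    ∃ Q ⊆ W, Q.Nonempty ∧ (n : ℤ) ∣ ∑ i ∈ Q, g i := by
  classical
  have : NeZero n := ⟨by omega⟩
  let e : Fin W.card ↪ ι := W.equivFin.symm.toEmbedding.trans (Function.Embedding.subtype _)
  have heW : ∀ i, e i ∈ W := fun i => (W.equivFin.symm i).2
  -- Two of the `n + 1` initial sums agree modulo `n`.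
  let I : ℕ → Finset (Fin W.card) := fun j => Finset.univ.filter fun i => (i : ℕ) < j
  let p : Fin (n + 1) → ZMod n := fun j => ((∑ i ∈ I j, g (e i) : ℤ) : ZMod n)
  obtain ⟨a, b, hab, hp⟩ := Fintype.exists_ne_map_eq_of_card_lt p (by simp [ZMod.card])
  wlog hlt : a < b generalizing a b
  · exact this b a hab.symm hp.symm (lt_of_le_of_ne (not_lt.mp hlt) hab.symm)
  have hlt' : (a : ℕ) < b := hlt
  have hsub : I a ⊆ I b := by
    intro i hi
    simp only [I, Finset.mem_filter, Finset.mem_univ, true_and] at hi ⊢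
    omega
  refine ⟨(I b \ I a).map e, ?_, ?_, ?_⟩
  · intro x hx
    obtain ⟨i, -, rfl⟩ := Finset.mem_map.mp hx
    exact heW i
  · have hb := b.2
    refine Finset.Nonempty.map ⟨⟨a, by omega⟩, ?_⟩
    simp [I, hlt']
  · rw [Finset.sum_map, ← ZMod.intCast_zmod_eq_zero_iff_dvd]
    have h := Finset.sum_sdiff (f := fun i => g (e i)) hsub
    have h2 : ∑ i ∈ I b \ I a, g (e i) = ∑ i ∈ I b, g (e i) - ∑ i ∈ I a, g (e i) := by
      linarith
    rw [h2, Int.cast_sub]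
    exact sub_eq_zero.mpr hp.symm

/-- If `n ≤ |W|`, a subset sum modulo `n` that occurs in `W` occurs at least twice: apply
`exists_zero_sum` after changing the sign of the terms indexed by `R`. -/
lemma exists_second_rep {ι : Type*} [DecidableEq ι] {n : ℕ} (hn : 1 ≤ n) (W R : Finset ι)
    (hW : n ≤ W.card) (hR : R ⊆ W) (g : ι → ℤ) :
    ∃ R' ⊆ W, R' ≠ R ∧ (n : ℤ) ∣ ∑ i ∈ R', g i - ∑ i ∈ R, g i := by
  obtain ⟨Q, hQ, hne, hd⟩ := exists_zero_sum_s10 hn W hW (fun i => if i ∈ R then - g i else g i)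
  refine ⟨(R \ Q) ∪ (Q \ R), ?_, ?_, ?_⟩
  · intro x hx
    simp only [Finset.mem_union, Finset.mem_sdiff] at hx
    rcases hx with h | h
    · exact hR h.1
    · exact hQ h.1
  · intro h
    obtain ⟨x, hx⟩ := hne
    have := congrArg (fun s => x ∈ s) h
    simp [hx] at this
  · have h1 : ∑ i ∈ (R \ Q) ∪ (Q \ R), g i = ∑ i ∈ R \ Q, g i + ∑ i ∈ Q \ R, g i :=
      Finset.sum_union (by
        rw [Finset.disjoint_left]; intro x hx hx'
        simp only [Finset.mem_sdiff] at hx hx'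
        exact hx.2 hx'.1)
    have h2 := Finset.sum_inter_add_sum_sdiff R Q g
    have h3 := Finset.sum_inter_add_sum_sdiff Q R (fun i => if i ∈ R then - g i else g i)
    have h4 : ∑ i ∈ Q ∩ R, (if i ∈ R then - g i else g i) = - ∑ i ∈ R ∩ Q, g i := by
      rw [Finset.inter_comm, ← Finset.sum_neg_distrib]
      exact Finset.sum_congr rfl fun i hi => by simp [(Finset.mem_inter.mp hi).1]
    have h5 : ∑ i ∈ Q \ R, (if i ∈ R then - g i else g i) = ∑ i ∈ Q \ R, g i :=
      Finset.sum_congr rfl fun i hi => by simp [(Finset.mem_sdiff.mp hi).2]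
    rw [h4, h5] at h3
    convert hd using 1
    linarith

/-- Olson's bound: a subset sum modulo `n` that occurs in `W` is attained by at least
`2 ^ (|W| - n + 1)` subsets of `W`. In the inductive step, an element `x` lying in exactly one of
two such subsets splits the count into two counts over `W \ {x}`, both nonzero. -/
lemma olson_bound {ι : Type*} [DecidableEq ι] {n : ℕ} (hn : 1 ≤ n) (g : ι → ℤ) (m : ℕ) :
    ∀ (W : Finset ι) (h : ℤ), W.card = m → (∃ R ⊆ W, (n : ℤ) ∣ ∑ i ∈ R, g i - h) →
      2 ^ (m + 1 - n) ≤ (W.powerset.filter fun R => (n : ℤ) ∣ ∑ i ∈ R, g i - h).card := by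
  induction m with
  | zero =>
    rintro W h - ⟨R, hR, hd⟩
    rw [show 0 + 1 - n = 0 by omega, pow_zero]
    exact Finset.card_pos.mpr ⟨R, by simp [hR, hd]⟩
  | succ m ih =>
    rintro W h hW ⟨R, hR, hd⟩
    by_cases hmn : m + 1 < n
    · rw [show m + 1 + 1 - n = 0 by omega, pow_zero]
      exact Finset.card_pos.mpr ⟨R, by simp [hR, hd]⟩
    obtain ⟨R', hR', hne, hd'⟩ := exists_second_rep hn W R (by omega) hR g
    have hd'' : (n : ℤ) ∣ ∑ i ∈ R', g i - h := by
      have := dvd_add hd' hd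
      rwa [sub_add_sub_cancel] at this
    have key : ∃ x ∈ W, (∃ U ⊆ W, x ∈ U ∧ (n : ℤ) ∣ ∑ i ∈ U, g i - h) ∧
        (∃ V ⊆ W, x ∉ V ∧ (n : ℤ) ∣ ∑ i ∈ V, g i - h) := by
      by_contra hcon
      push Not at hcon
      apply hne
      ext x
      constructor
      · intro hx
        by_contra hx'
        exact hcon x (hR' hx) ⟨R', hR', hx, hd''⟩ R hR hx' hd
      · intro hx
        by_contra hx'
        exact hcon x (hR hx) ⟨R, hR, hx, hd⟩ R' hR' hx' hd''
    obtain ⟨x, hx, ⟨U, hU, hxU, hUd⟩, V, hV, hxV, hVd⟩ := key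
    have hc : (W.erase x).card = m := by rw [Finset.card_erase_of_mem hx, hW]; rfl
    have i1 := ih (W.erase x) h hc ⟨V, fun y hy => Finset.mem_erase.mpr
      ⟨fun e => hxV (e ▸ hy), hV hy⟩, hVd⟩
    have i2 := ih (W.erase x) (h - g x) hc ⟨U.erase x, Finset.erase_subset_erase x hU, by
      have := Finset.add_sum_erase U g hxU
      convert hUd using 1
      linarith⟩
    set F1 := (W.erase x).powerset.filter fun R => (n : ℤ) ∣ ∑ i ∈ R, g i - h
    set F2 := (W.erase x).powerset.filter fun R => (n : ℤ) ∣ ∑ i ∈ R, g i - (h - g x)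
    have hF1 : ∀ A ∈ F1, A ⊆ W.erase x ∧ (n : ℤ) ∣ ∑ i ∈ A, g i - h := by
      intro A hA; simpa [F1] using hA
    have hF2 : ∀ A ∈ F2, A ⊆ W.erase x ∧ (n : ℤ) ∣ ∑ i ∈ A, g i - (h - g x) := by
      intro A hA; simpa [F2] using hA
    have hx1 : ∀ A, A ⊆ W.erase x → x ∉ A := fun A hA h => by simpa using hA h
    have hinj : Set.InjOn (insert x) (F2 : Set (Finset ι)) := by
      intro A hA B hB hAB
      rw [← Finset.erase_insert (hx1 A (hF2 A hA).1), ← Finset.erase_insert (hx1 B (hF2 B hB).1)]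
      exact congrArg (fun s => Finset.erase s x) hAB
    have hdis : Disjoint F1 (F2.image (insert x)) := by
      rw [Finset.disjoint_left]
      intro A hA hA'
      obtain ⟨B, -, rfl⟩ := Finset.mem_image.mp hA'
      exact hx1 _ (hF1 _ hA).1 (Finset.mem_insert_self x B)
    have hsub : F1 ∪ F2.image (insert x) ⊆
        W.powerset.filter fun R => (n : ℤ) ∣ ∑ i ∈ R, g i - h := by
      intro A hA
      rw [Finset.mem_filter, Finset.mem_powerset]
      rcases Finset.mem_union.mp hA with hA | hA
      · exact ⟨(hF1 A hA).1.trans (Finset.erase_subset _ _), (hF1 A hA).2⟩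
      · obtain ⟨B, hB, rfl⟩ := Finset.mem_image.mp hA
        refine ⟨Finset.insert_subset hx ((hF2 B hB).1.trans (Finset.erase_subset _ _)), ?_⟩
        rw [Finset.sum_insert (hx1 B (hF2 B hB).1)]
        convert (hF2 B hB).2 using 1
        ring
    have hle := Finset.card_le_card hsub
    rw [Finset.card_union_of_disjoint hdis, Finset.card_image_of_injOn hinj] at hle
    rw [show m + 1 + 1 - n = (m + 1 - n) + 1 by omega, pow_succ]
    omega

lemma exists_small_rep {ι : Type*} [DecidableEq ι] {n : ℕ} (hn : 1 ≤ n) (g : ι → ℤ)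
    (V : Finset ι) : ∃ Z ⊆ V, Z.card < n ∧ (n : ℤ) ∣ ∑ i ∈ Z, g i - ∑ i ∈ V, g i := by
  obtain ⟨Z, hZ, hmin⟩ := Finset.exists_min_image
    (V.powerset.filter fun R => (n : ℤ) ∣ ∑ i ∈ R, g i - ∑ i ∈ V, g i) Finset.card
    ⟨V, by simp⟩
  rw [Finset.mem_filter, Finset.mem_powerset] at hZ
  refine ⟨Z, hZ.1, ?_, hZ.2⟩
  by_contra hcard
  obtain ⟨Q, hQ, hne, hd⟩ := exists_zero_sum_s10 hn Z (not_lt.mp hcard) g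
  have hs := Finset.sum_sdiff (f := g) hQ
  have h1 := hmin (Z \ Q) (by
    rw [Finset.mem_filter, Finset.mem_powerset]
    refine ⟨Finset.sdiff_subset.trans hZ.1, ?_⟩
    have := dvd_sub hZ.2 hd
    rwa [show ∑ i ∈ Z \ Q, g i - ∑ i ∈ V, g i =
      ∑ i ∈ Z, g i - ∑ i ∈ V, g i - ∑ i ∈ Q, g i by linarith])
  have h2 := Finset.card_sdiff_add_card_eq_card hQ
  have h3 := hne.card_pos
  omega

/-- The count when at least `n - 1` terms equal `1`. -/
lemma count_many_ones {n ℓ L δ : ℕ} (hn : 1 ≤ n) (hL : n ∣ L) (hδ : 2 * δ + n ≤ L)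
    (hℓ : L ≤ ℓ + δ) (T : Fin ℓ → ℤ) (hT : ∀ i, 1 ≤ T i)
    (he : (δ : ℤ) ≤ ∑ i, (T i - 1))
    (hones : n - 1 ≤ (Finset.univ.filter fun i => T i = 1).card) :
    2 ^ (ℓ + 1 + δ - L) - 1 ≤ (Finset.univ.filter fun S : Finset (Fin ℓ) =>
      (n : ℤ) ∣ ∑ i ∈ S, T i ∧ (L : ℤ) ≤ ∑ i ∈ S, T i).card := by
  classical
  obtain ⟨P, hPO, hPc⟩ := Finset.exists_subset_card_eq hones
  have hP1 : ∀ i ∈ P, T i = 1 := fun i hi => by simpa using hPO hi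
  obtain ⟨D, hDc, hDe⟩ : ∃ D : Finset (Fin ℓ), D.card ≤ δ ∧ (δ : ℤ) ≤ ∑ i ∈ D, (T i - 1) := by
    by_cases hB : (Finset.univ.filter fun i => T i ≠ 1).card ≤ δ
    · refine ⟨_, hB, he.trans (le_of_eq ?_)⟩
      symm
      apply Finset.sum_subset (Finset.subset_univ _)
      intro i _ hi
      simp only [Finset.mem_filter, Finset.mem_univ, true_and, not_not] at hi
      omega
    · obtain ⟨D, hD, hDc⟩ := Finset.exists_subset_card_eq (not_le.mp hB).le
      refine ⟨D, hDc.le, ?_⟩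
      have := Finset.card_nsmul_le_sum D (fun i => T i - 1) 1 (fun i hi => by
        have h1 : T i ≠ 1 := by simpa using hD hi
        have := hT i
        omega)
      simpa [hDc] using this
  obtain ⟨Y, hY, -, hYc⟩ := Finset.exists_subsuperset_card_eq (Finset.subset_univ (D ∪ P))
    (n := L - δ - 1) (by have := Finset.card_union_le D P; omega) (by simp; omega)
  have hYe : (L : ℤ) - 1 ≤ ∑ i ∈ Y, T i := by
    have h1 : ∑ i ∈ D, (T i - 1) ≤ ∑ i ∈ Y, (T i - 1) :=
      Finset.sum_le_sum_of_subset_of_nonneg (Finset.subset_union_left.trans hY)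
        (fun i _ _ => by have := hT i; omega)
    rw [Finset.sum_sub_distrib (s := Y)] at h1
    simp only [Finset.sum_const, hYc, nsmul_eq_mul, mul_one] at h1
    have : ((L - δ - 1 : ℕ) : ℤ) = L - δ - 1 := by omega
    rw [this] at h1
    linarith
  have hPY : P ⊆ Y := Finset.subset_union_right.trans hY
  have hq : ∀ r : ℕ, ∃ q ⊆ P, r < n → q.card = r := fun r => by
    by_cases hr : r < n
    · obtain ⟨q, h1, h2⟩ := Finset.exists_subset_card_eq (show r ≤ P.card by omega)
      exact ⟨q, h1, fun _ => h2⟩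
    · exact ⟨∅, by simp, fun h => absurd h hr⟩
  choose q hqP hqc using hq
  let r : Finset (Fin ℓ) → ℕ := fun A => ((∑ i ∈ Aᶜ, T i) % (n : ℤ)).toNat
  have hn0 : (0 : ℤ) < n := by exact_mod_cast hn
  have hr : ∀ A, (r A : ℤ) = (∑ i ∈ Aᶜ, T i) % (n : ℤ) := fun A =>
    Int.toNat_of_nonneg (Int.emod_nonneg _ hn0.ne')
  have hrn : ∀ A, r A < n := fun A => by
    have := Int.emod_lt_of_pos (∑ i ∈ Aᶜ, T i) hn0
    rw [← hr] at this
    exact_mod_cast this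
  have hcard : (Yᶜ.powerset.erase Yᶜ).card = 2 ^ (ℓ + 1 + δ - L) - 1 := by
    rw [Finset.card_erase_of_mem (Finset.mem_powerset_self _), Finset.card_powerset,
      Finset.card_compl, hYc, Fintype.card_fin]
    congr 2
    omega
  rw [← hcard]
  have hAY : ∀ A ∈ Yᶜ.powerset.erase Yᶜ, Y ⊆ Aᶜ ∧ A ⊆ Yᶜ ∧ ∃ x, x ∉ Y ∧ x ∉ A := by
    intro A hA
    rw [Finset.mem_erase, Finset.mem_powerset] at hA
    refine ⟨?_, hA.2, ?_⟩
    · intro x hx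
      rw [Finset.mem_compl]
      intro hxA
      exact (Finset.mem_compl.mp (hA.2 hxA)) hx
    · obtain ⟨x, hx, hx'⟩ := Finset.exists_of_ssubset (hA.2.ssubset_of_ne hA.1)
      exact ⟨x, Finset.mem_compl.mp hx, hx'⟩
  apply Finset.card_le_card_of_injOn (fun A => Aᶜ \ q (r A))
  · intro A hA
    obtain ⟨h1, h2, x, hxY, hxA⟩ := hAY A hA
    have hsum := Finset.sum_sdiff (f := T) ((hqP (r A)).trans (hPY.trans h1))
    have hqs : ∑ i ∈ q (r A), T i = r A := by
      rw [Finset.sum_congr rfl (fun i hi => hP1 i (hqP _ hi))]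
      simp [hqc _ (hrn A)]
    rw [hqs, hr] at hsum
    have hbig : (L : ℤ) ≤ ∑ i ∈ Aᶜ, T i := by
      have h3 : ∑ i ∈ insert x Y, T i ≤ ∑ i ∈ Aᶜ, T i :=
        Finset.sum_le_sum_of_subset_of_nonneg
          (Finset.insert_subset (Finset.mem_compl.mpr hxA) h1)
          (fun i _ _ => by have := hT i; omega)
      rw [Finset.sum_insert hxY] at h3
      have := hT x
      linarith
    have hdm := Int.mul_ediv_add_emod (∑ i ∈ Aᶜ, T i) n
    have heq : ∑ i ∈ Aᶜ \ q (r A), T i = n * ((∑ i ∈ Aᶜ, T i) / n) := by linarith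
    simp only [Finset.coe_filter, Finset.mem_univ, true_and, Set.mem_ofPred_eq]
    rw [heq]
    refine ⟨dvd_mul_right _ _, ?_⟩
    -- `n * (s / n)` is the largest multiple of `n` below `s`, and `L` is such a multiple.
    obtain ⟨c, rfl⟩ := hL
    push_cast at hbig ⊢
    apply mul_le_mul_of_nonneg_left _ hn0.le
    rw [Int.le_ediv_iff_mul_le hn0]
    linarith
  · intro A hA B hB hAB
    have hrec : ∀ A ∈ Yᶜ.powerset.erase Yᶜ, A = Yᶜ \ (Aᶜ \ q (r A)) := by
      intro A hA
      obtain ⟨h1, h2, -⟩ := hAY A hA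
      ext y
      have h3 : y ∈ q (r A) → y ∈ Y := fun h => hPY (hqP _ h)
      have h4 : y ∈ A → y ∈ Yᶜ := fun h => h2 h
      simp only [Finset.mem_sdiff, Finset.mem_compl] at h4 ⊢
      tauto
    rw [hrec A hA, hrec B hB]
    exact congrArg (fun s => Yᶜ \ s) hAB

/-- The count when at most `n - 2` terms equal `1`. -/
lemma count_few_ones {n ℓ L δ : ℕ} (hn : 1 ≤ n) (hδ : 2 * δ + 3 * n ≤ L + 1)
    (hℓ : L ≤ ℓ + δ) (T : Fin ℓ → ℤ) (hT : ∀ i, 1 ≤ T i)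
    (hones : (Finset.univ.filter fun i => T i = 1).card < n - 1) :
    2 ^ (ℓ + 1 + δ - L) ≤ (Finset.univ.filter fun S : Finset (Fin ℓ) =>
      (n : ℤ) ∣ ∑ i ∈ S, T i ∧ (L : ℤ) ≤ ∑ i ∈ S, T i).card := by
  classical
  obtain ⟨Z, -, hZc, hZd⟩ := exists_small_rep hn T Finset.univ
  obtain ⟨W, hZW, -, hWc⟩ := Finset.exists_subsuperset_card_eq (Finset.subset_univ Z)
    (n := ℓ + δ - L + n) (by omega) (by simp; omega)
  have hol := olson_bound hn T _ W (∑ i, T i) hWc ⟨Z, hZW, hZd⟩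
  rw [show ℓ + δ - L + n + 1 - n = ℓ + 1 + δ - L by omega] at hol
  refine hol.trans (Finset.card_le_card_of_injOn (fun R => Rᶜ) ?_ ?_)
  · intro R hR
    simp only [Finset.coe_filter, Finset.mem_powerset, Set.mem_ofPred_eq] at hR
    obtain ⟨hRW, hRd⟩ := hR
    simp only [Finset.coe_filter, Finset.mem_univ, true_and, Set.mem_ofPred_eq]
    have hs := Finset.sum_add_sum_compl R T
    constructor
    · rw [← dvd_neg]
      rwa [show -∑ i ∈ Rᶜ, T i = ∑ i ∈ R, T i - ∑ i, T i by linarith]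
    · have h1 : ∑ i ∈ Wᶜ, T i ≤ ∑ i ∈ Rᶜ, T i :=
        Finset.sum_le_sum_of_subset_of_nonneg (Finset.compl_subset_compl.mpr hRW)
          (fun i _ _ => by have := hT i; omega)
      have h2 : ∑ i ∈ Wᶜ, (2 - if T i = 1 then (1 : ℤ) else 0) ≤ ∑ i ∈ Wᶜ, T i :=
        Finset.sum_le_sum fun i _ => by
          have := hT i
          split_ifs <;> omega
      rw [Finset.sum_sub_distrib, ← Finset.sum_filter] at h2
      simp only [Finset.sum_const, nsmul_eq_mul, mul_one, Finset.card_compl, hWc,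
        Fintype.card_fin] at h2
      have h3 : (Wᶜ.filter fun i => T i = 1).card ≤
          (Finset.univ.filter fun i => T i = 1).card :=
        Finset.card_le_card (Finset.filter_subset_filter _ (Finset.subset_univ _))
      omega
  · intro A _ B _ h
    exact compl_injective h

theorem stmt10 {k n ℓ : ℕ} (hn : 1 ≤ n) (hkn : n < k) (δ : ℕ) (hδ1 : 1 ≤ δ)
    (hδ2 : 2 * δ + 3 * n ≤ 2 * (((k + n - 1) / n * n + 1) / 2))
    (T : Fin ℓ → ℤ) (hT : ∀ i, 1 ≤ T i ∧ T i ≤ (k : ℤ) + n - 1)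
    (hM : Nat.card {S : Finset (Fin ℓ) // S.Nonempty ∧ (n : ℤ) ∣ ∑ i ∈ S, T i ∧
        (((k + n - 1) / n * n : ℕ) : ℤ) ≤ ∑ i ∈ S, T i}
      < 2 ^ (ℓ + 1 + δ - (k + n - 1) / n * n) - 1) :
    (∑ i, (T i - 1)) ≤ (δ : ℤ) - 1 := by
  classical
  have hL : n ∣ (k + n - 1) / n * n := dvd_mul_left _ _
  generalize (k + n - 1) / n * n = L at *
  have hδ : 2 * δ + 3 * n ≤ L + 1 := by omega
  have hT1 : ∀ i, 1 ≤ T i := fun i => (hT i).1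
  by_contra hcon
  have he : (δ : ℤ) ≤ ∑ i, (T i - 1) := by omega
  have hℓ : L ≤ ℓ + δ := by
    by_contra h
    rw [show ℓ + 1 + δ - L = 0 by omega] at hM
    simp at hM
  have hcard : Nat.card {S : Finset (Fin ℓ) // S.Nonempty ∧ (n : ℤ) ∣ ∑ i ∈ S, T i ∧
      (L : ℤ) ≤ ∑ i ∈ S, T i} = (Finset.univ.filter fun S : Finset (Fin ℓ) =>
      (n : ℤ) ∣ ∑ i ∈ S, T i ∧ (L : ℤ) ≤ ∑ i ∈ S, T i).card := by
    rw [Nat.card_eq_fintype_card, Fintype.card_subtype]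
    congr 1
    ext S
    simp only [Finset.mem_filter, Finset.mem_univ, true_and, and_iff_right_iff_imp]
    rintro ⟨-, h⟩
    rw [Finset.nonempty_iff_ne_empty]
    rintro rfl
    simp at h
    omega
  rw [hcard] at hM
  by_cases hones : n - 1 ≤ (Finset.univ.filter fun i => T i = 1).card
  · have := count_many_ones hn hL (by omega) hℓ T hT1 he hones
    omega
  · have := count_few_ones hn hδ hℓ T hT1 (not_le.mp hones)
    omega
end

section
/- Let ℓ ≥ 1 and let m : Fin ℓ → ℤ be a monotone (nondecreasing) sequence of positive integers, m 0 ≤ m 1 ≤ ⋯ ≤ m (ℓ−1) with all m i ≥ 1. Then m is 1-smooth if and only if m 0 = 1 and for every t with 1 ≤ t ≤ ℓ − 1 one has m t ≤ 1 + ∑_{i < t} m i. -/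
/-- The first `k` terms of a sequence in which each term is at most one more than the sum of its
predecessors have all integers from `0` to their total as subset sums. The empty subset is allowed,
with sum `0`. -/
lemma exists_subset_sum {ℓ : ℕ} (m : Fin ℓ → ℤ)
    (h : ∀ t : Fin ℓ, m t ≤ 1 + ∑ i ∈ Finset.Iio t, m i) (k : ℕ) (hk : k ≤ ℓ) :
    ∀ v : ℤ, 0 ≤ v → v ≤ ∑ i with i.val < k, m i →
      ∃ S : Finset (Fin ℓ), (∀ i ∈ S, i.val < k) ∧ ∑ i ∈ S, m i = v := by
  induction k with
  | zero =>
    intro v hv hv'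
    refine ⟨∅, by simp, ?_⟩
    simp at hv' ⊢
    omega
  | succ k ih =>
    intro v hv hv'
    have hset : (Finset.univ.filter fun i : Fin ℓ => i.val < k + 1) =
        insert ⟨k, hk⟩ (Finset.univ.filter fun i : Fin ℓ => i.val < k) := by
      ext i
      simp [Fin.ext_iff]
      omega
    have hIio : Finset.Iio (⟨k, hk⟩ : Fin ℓ) =
        Finset.univ.filter fun i : Fin ℓ => i.val < k := by
      ext i
      simp [Fin.lt_def]
    rw [hset, Finset.sum_insert (by simp)] at hv'
    have hm := h ⟨k, hk⟩
    rw [hIio] at hm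
    by_cases hc : v ≤ ∑ i with i.val < k, m i
    · obtain ⟨S, hS, hsum⟩ := ih (by omega) v hv hc
      exact ⟨S, fun i hi => (hS i hi).trans (Nat.lt_succ_self k), hsum⟩
    · obtain ⟨S, hS, hsum⟩ := ih (by omega) (v - m ⟨k, hk⟩) (by linarith [not_le.mp hc])
        (by linarith)
      refine ⟨insert ⟨k, hk⟩ S, ?_, ?_⟩
      · intro i hi
        rcases Finset.mem_insert.mp hi with rfl | hi
        · simp
        · exact (hS i hi).trans (Nat.lt_succ_self k)
      · rw [Finset.sum_insert (fun hmem => lt_irrefl _ (hS _ hmem)), hsum]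
        ring

theorem stmt11 {ℓ : ℕ} (hℓ : 1 ≤ ℓ) (m : Fin ℓ → ℤ) (hmono : Monotone m)
    (hpos : ∀ i, 1 ≤ m i) :
    IsOneSmooth m ↔
      (m ⟨0, hℓ⟩ = 1 ∧
        ∀ t : Fin ℓ, 1 ≤ (t : ℕ) → m t ≤ 1 + ∑ i ∈ Finset.Iio t, m i) := by
  have hnn : ∀ i, 0 ≤ m i := fun i => zero_le_one.trans (hpos i)
  have hIio0 : Finset.Iio (⟨0, hℓ⟩ : Fin ℓ) = ∅ := by
    ext i
    simp [Fin.lt_def]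
  constructor
  · intro hs
    have key : ∀ t : Fin ℓ, m t ≤ 1 + ∑ i ∈ Finset.Iio t, m i := by
      intro t
      by_contra! hlt
      have htot : m t ≤ ∑ i, m i :=
        Finset.single_le_sum (fun i _ => hnn i) (Finset.mem_univ t)
      have h0 : 0 ≤ ∑ i ∈ Finset.Iio t, m i := Finset.sum_nonneg fun i _ => hnn i
      have hmem : 1 + ∑ i ∈ Finset.Iio t, m i ∈ Set.Icc 1 (∑ i, m i) :=
        ⟨by linarith, by linarith⟩
      rw [← hs] at hmem
      obtain ⟨S, -, hS⟩ := hmem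
      by_cases hsub : S ⊆ Finset.Iio t
      · have := Finset.sum_le_sum_of_subset_of_nonneg hsub (fun i _ _ => hnn i)
        linarith
      · obtain ⟨i, hi, hit⟩ := Finset.not_subset.mp hsub
        have hti : m t ≤ m i := hmono (by simpa using hit)
        have := Finset.single_le_sum (fun i _ => hnn i) hi
        linarith
    refine ⟨le_antisymm ?_ (hpos _), fun t _ => key t⟩
    simpa [hIio0] using key ⟨0, hℓ⟩
  · rintro ⟨h1, h2⟩
    have h : ∀ t : Fin ℓ, m t ≤ 1 + ∑ i ∈ Finset.Iio t, m i := by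
      intro t
      rcases Nat.eq_zero_or_pos t.val with ht | ht
      · obtain rfl : t = ⟨0, hℓ⟩ := Fin.ext ht
        simp [hIio0, h1]
      · exact h2 t ht
    apply Set.Subset.antisymm
    · rintro s ⟨S, ⟨i, hi⟩, rfl⟩
      exact ⟨(hpos i).trans (Finset.single_le_sum (fun i _ => hnn i) hi),
        Finset.sum_le_sum_of_subset_of_nonneg (Finset.subset_univ S) (fun i _ _ => hnn i)⟩
    · rintro v ⟨hv1, hv2⟩
      obtain ⟨S, -, hS⟩ := exists_subset_sum m h ℓ le_rfl v (by linarith) (by simpa using hv2)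
      refine ⟨S, ?_, hS⟩
      rw [Finset.nonempty_iff_ne_empty]
      rintro rfl
      simp at hS
      omega
end

section
/- Let k > n ≥ 1 and let T : Fin ℓ → ℤ satisfy 1 ≤ T i ≤ k + n − 1 for every i, with ℓ ≥ ⌊((⌈k/n⌉ + 1)·n)/2⌋. Suppose T is idempotent-sum free, i.e., there is no nonempty subset S ⊆ Fin ℓ with n ∣ ∑_{i∈S} T i and ∑_{i∈S} T i ≥ ⌈k/n⌉·n. Then T is 1-smooth (the set of sums of nonempty subsets of Fin ℓ equals the integer interval [1, ∑_i T i]) and ∑_i T i ≤ ⌈k/n⌉·n − 1. -/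
/-- A sequence of positive integers with sum less than twice its length attains every value from
`0` to its sum as a subset sum. The empty set is allowed so that the induction can start there. -/
lemma exists_subset_sum_eq {ι : Type*} [DecidableEq ι] (T : ι → ℤ) (hT : ∀ i, 1 ≤ T i) (c : ℕ) :
    ∀ A : Finset ι, A.card = c → (∑ i ∈ A, T i < 2 * A.card ∨ A = ∅) →
      ∀ s : ℤ, 0 ≤ s → s ≤ ∑ i ∈ A, T i → ∃ S ⊆ A, ∑ i ∈ S, T i = s := by
  induction c with
  | zero =>
    intro A hA _ s hs0 hs
    obtain rfl := Finset.card_eq_zero.mp hA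
    exact ⟨∅, subset_rfl, by simp at hs ⊢; omega⟩
  | succ c ih =>
    intro A hA hsum s hs0 hs
    have hne : A.Nonempty := Finset.card_pos.mp (by omega)
    have hlt : ∑ i ∈ A, T i < 2 * A.card := hsum.resolve_right hne.ne_empty
    obtain ⟨x, hx, hmax⟩ := Finset.exists_max_image A T hne
    have hcard : (A.erase x).card = c := by rw [Finset.card_erase_of_mem hx]; omega
    have hadd : T x + ∑ i ∈ A.erase x, T i = ∑ i ∈ A, T i := Finset.add_sum_erase A T hx
    have hge : (c : ℤ) ≤ ∑ i ∈ A.erase x, T i := by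
      have h := Finset.card_nsmul_le_sum (A.erase x) T 1 (fun i _ => hT i)
      simpa [hcard] using h
    have hle : ∑ i ∈ A.erase x, T i ≤ c * T x := by
      have h := Finset.sum_le_card_nsmul (A.erase x) T (T x)
        (fun i hi => hmax i (Finset.mem_of_mem_erase hi))
      simpa [hcard] using h
    have hx1 := hT x
    have hrest : ∑ i ∈ A.erase x, T i < 2 * (A.erase x).card ∨ A.erase x = ∅ := by
      rcases Nat.eq_zero_or_pos c with hc | hc
      · exact Or.inr (Finset.card_eq_zero.mp (hcard.trans hc))
      · left
        rw [hcard]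
        rw [hA] at hlt
        push_cast at hlt
        rcases hx1.eq_or_lt with h | h
        · rw [← h] at hle
          omega
        · omega
    rcases le_or_gt s (∑ i ∈ A.erase x, T i) with h | h
    · obtain ⟨S, hS, hSs⟩ := ih _ hcard hrest s hs0 h
      exact ⟨S, hS.trans (Finset.erase_subset _ _), hSs⟩
    -- `T x ≤ c + 1`, while the other terms already sum to at least `c`, so `0 ≤ s - T x`.
    · obtain ⟨S, hS, hSs⟩ := ih _ hcard hrest (s - T x)
        (by rw [hA] at hlt; push_cast at hlt; omega) (by omega)
      have hxS : x ∉ S := fun hxS => Finset.notMem_erase x A (hS hxS)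
      refine ⟨insert x S, Finset.insert_subset hx (hS.trans (Finset.erase_subset _ _)), ?_⟩
      rw [Finset.sum_insert hxS]
      omega

/-- Any `n` or more integers contain a nonempty subfamily with sum divisible by `n`. -/
lemma exists_dvd_sum {ι : Type*} [LinearOrder ι] {n : ℕ} (hn : 1 ≤ n) (T : ι → ℤ)
    (A : Finset ι) (hA : n ≤ A.card) :
    ∃ S ⊆ A, S.Nonempty ∧ (n : ℤ) ∣ ∑ i ∈ S, T i := by
  by_contra! hcon
  let g : ι → ℤ := fun i => ∑ x ∈ A with x ≤ i, T x
  have hn0 : (0 : ℤ) < n := by exact_mod_cast hn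
  have hmaps : ∀ i ∈ A, g i % n ∈ Finset.Ioo (0 : ℤ) n := by
    intro i hi
    have h1 : g i % n ≠ 0 := fun h =>
      hcon _ (Finset.filter_subset (· ≤ i) A) ⟨i, by simp [hi]⟩ (Int.dvd_of_emod_eq_zero h)
    have h2 := Int.emod_nonneg (g i) hn0.ne'
    have h3 := Int.emod_lt_of_pos (g i) hn0
    rw [Finset.mem_Ioo]
    omega
  have hcol : ∀ i ∈ A, ∀ j ∈ A, i < j → g i % n ≠ g j % n := by
    intro i hi j hj hij h
    apply hcon (A.filter (fun x => i < x ∧ x ≤ j)) (Finset.filter_subset _ _)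
      ⟨j, by simp [hj, hij]⟩
    have hsplit : g j = g i + ∑ x ∈ A with i < x ∧ x ≤ j, T x := by
      simp only [g]
      rw [← Finset.sum_union]
      · congr 1
        ext x
        simp only [Finset.mem_filter, Finset.mem_union]
        constructor
        · rintro ⟨hx, hxj⟩
          rcases le_or_gt x i with h | h
          · exact Or.inl ⟨hx, h⟩
          · exact Or.inr ⟨hx, h, hxj⟩
        · rintro (⟨hx, h⟩ | ⟨hx, -, h⟩)
          · exact ⟨hx, h.trans hij.le⟩
          · exact ⟨hx, h⟩
      · rw [Finset.disjoint_left]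
        intro x hx hx'
        simp only [Finset.mem_filter] at hx hx'
        exact absurd hx.2 hx'.2.1.not_ge
    have hd := Int.ModEq.dvd (show g i ≡ g j [ZMOD n] from h)
    rwa [hsplit, add_sub_cancel_left] at hd
  obtain ⟨i, hi, j, hj, hij, h⟩ := Finset.exists_ne_map_eq_of_card_lt_of_maps_to
    (s := A) (t := Finset.Ioo (0 : ℤ) n) (f := fun i => g i % n)
    (by rw [Int.card_Ioo]; omega) hmaps
  rcases lt_or_gt_of_ne hij with hlt | hlt
  · exact hcol i hi j hj hlt h
  · exact hcol j hj i hi hlt h.symm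

/-- The bound on the total sum, for an arbitrary threshold `m * n`. -/
lemma sum_lt_of_free {n m ℓ : ℕ} (hn : 1 ≤ n) (T : Fin ℓ → ℤ) (hT : ∀ i, 1 ≤ T i)
    (hℓ : (m + 1) * n / 2 ≤ ℓ)
    (hfree : ∀ S : Finset (Fin ℓ), S.Nonempty → (n : ℤ) ∣ ∑ i ∈ S, T i →
      ∑ i ∈ S, T i < (m * n : ℕ)) (hm : 1 ≤ m) :
    ∑ i, T i < (m * n : ℕ) := by
  by_contra! hbig
  have hn0 : (0 : ℤ) < n := by exact_mod_cast hn
  obtain ⟨S, hS, hmax⟩ := Finset.exists_max_image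
    (Finset.univ.filter fun S : Finset (Fin ℓ) => (n : ℤ) ∣ ∑ i ∈ S, T i) Finset.card
    ⟨∅, by simp⟩
  have hSd : (n : ℤ) ∣ ∑ i ∈ S, T i := by simpa using hS
  have hR : Sᶜ.card < n := by
    by_contra! hR
    obtain ⟨Z, hZ, hZne, hZd⟩ := exists_dvd_sum hn T Sᶜ hR
    have hdis : Disjoint S Z := (Finset.disjoint_of_subset_left hZ disjoint_compl_left).symm
    have h := hmax (S ∪ Z) (by simpa [Finset.sum_union hdis] using dvd_add hSd hZd)
    rw [Finset.card_union_of_disjoint hdis] at h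
    have := hZne.card_pos
    omega
  have hcard : S.card + Sᶜ.card = ℓ := by simp
  have hexp : (m + 1) * n = m * n + n := by ring
  have hmn : n ≤ m * n := Nat.le_mul_of_pos_left n hm
  rw [hexp] at hℓ
  have hSne : S.Nonempty := Finset.card_pos.mp (by omega)
  -- A multiple of `n` below `m * n` is at most `(m - 1) * n`.
  have hSle : ∑ i ∈ S, T i + n ≤ (m * n : ℕ) := by
    have h := hfree S hSne hSd
    obtain ⟨j, hj⟩ := hSd
    rw [hj] at h ⊢
    push_cast at h ⊢
    have : j < m := by nlinarith
    nlinarith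
  have hSge : (n : ℤ) ≤ ∑ i ∈ S, T i :=
    Int.le_of_dvd (Finset.sum_pos (fun i _ => hT i) hSne) hSd
  obtain ⟨D, hDS, hD⟩ := exists_subset_sum_eq T hT S.card S rfl (Or.inl (by omega))
    ((∑ i, T i) % n) (Int.emod_nonneg _ hn0.ne') ((Int.emod_lt_of_pos _ hn0).le.trans hSge)
  have hDc : ∑ i ∈ Dᶜ, T i = n * ((∑ i, T i) / n) := by
    have h1 := Finset.sum_add_sum_compl D T
    have h2 := Int.emod_add_mul_ediv (∑ i, T i) n
    omega
  have hq : (m : ℤ) ≤ (∑ i, T i) / n := by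
    rw [Int.le_ediv_iff_mul_le hn0]
    exact_mod_cast hbig
  have hDge : ((m * n : ℕ) : ℤ) ≤ ∑ i ∈ Dᶜ, T i := by
    rw [hDc]
    push_cast
    nlinarith
  have hDne : Dᶜ.Nonempty := by
    rw [Finset.nonempty_iff_ne_empty]
    intro h
    rw [h, Finset.sum_empty] at hDge
    omega
  exact absurd (hfree _ hDne ⟨_, hDc⟩) hDge.not_gt

theorem stmt15 {k n ℓ : ℕ} (hn : 1 ≤ n) (hkn : n < k) (T : Fin ℓ → ℤ)
    (hT : ∀ i, 1 ≤ T i ∧ T i ≤ (k : ℤ) + n - 1)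
    (hℓ : ((k + n - 1) / n + 1) * n / 2 ≤ ℓ)
    (hfree : ¬ ∃ S : Finset (Fin ℓ), S.Nonempty ∧ (n : ℤ) ∣ ∑ i ∈ S, T i ∧
      (((k + n - 1) / n * n : ℕ) : ℤ) ≤ ∑ i ∈ S, T i) :
    IsOneSmooth T ∧ (∑ i, T i) ≤ (((k + n - 1) / n * n : ℕ) : ℤ) - 1 := by
  have hm : 1 ≤ (k + n - 1) / n := (Nat.one_le_div_iff hn).mpr (by omega)
  generalize (k + n - 1) / n = m at *
  have hpos : ∀ i, 1 ≤ T i := fun i => (hT i).1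
  have hlt : ∑ i, T i < (m * n : ℕ) := by
    refine sum_lt_of_free hn T hpos hℓ (fun S hS hd => ?_) hm
    by_contra! h
    exact hfree ⟨S, hS, hd, h⟩
  refine ⟨?_, by omega⟩
  have hexp : (m + 1) * n = m * n + n := by ring
  rw [hexp] at hℓ
  ext s
  simp only [Set.mem_ofPred_eq, Set.mem_Icc]
  constructor
  · rintro ⟨S, hS, rfl⟩
    exact ⟨Int.add_one_le_of_lt (Finset.sum_pos (fun i _ => hpos i) hS),
      Finset.sum_le_sum_of_subset_of_nonneg (Finset.subset_univ S)
        (fun i _ _ => zero_le_one.trans (hpos i))⟩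
  · rintro ⟨h1, h2⟩
    have hcard : (Finset.univ : Finset (Fin ℓ)).card = ℓ := by simp
    obtain ⟨S, -, hS⟩ := exists_subset_sum_eq T hpos ℓ Finset.univ hcard
      (Or.inl (by rw [hcard]; omega)) s (by omega) h2
    refine ⟨S, ?_, hS⟩
    rw [Finset.nonempty_iff_ne_empty]
    rintro rfl
    rw [Finset.sum_empty] at hS
    omega
end

section
/- Let G be a finite additive abelian group and X a subgroup of G. Let d be a positive integer such that every sequence f : Fin d → G⧸X contains a nonempty zero-sum subsequence, i.e., for every f there is a nonempty subset S ⊆ Fin d with ∑_{i∈S} f i = 0. Then for every ℓ and every sequence T : Fin ℓ → G, the number of subsets S ⊆ Fin ℓ (including the empty set) with ∑_{i∈S} T i ∈ X is at least 2^(ℓ − d + 1), where the exponent is interpreted via truncated (natural-number) subtraction. -/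
/-!
Everything takes place in `H = G ⧸ X`, where the claim is Olson's bound: a sequence of length `n`
over `H` has at least `2 ^ (n + 1 - d)` zero-sum subsequences.

The key is a sign change. Negating the terms of `f` indexed by `B` gives a sequence whose zero-sum
subsets `S` correspond, through `S ↦ S ∆ B`, to the subsets of `f` with the same sum as `B`
(`sum_symmDiff_eq`). A lower bound for zero-sum subsets that is uniform over all sequences of a
given length is therefore also a lower bound for subsets with any prescribed attained sum.

Induct on the length `n`. If `n < d`, the empty set suffices. If `n ≥ d`, choose a nonempty
zero-sum set `A` and `i ∈ A`. After deleting the index `i`, both `0` and `-f i` are attained (by `∅`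
and `A \ {i}`), so the induction hypothesis applies both to the zero-sum sets avoiding `i` and to
those containing `i`, which doubles the bound.
-/

open Finset
open scoped symmDiff

theorem sum_symmDiff_eq {ι H : Type*} [DecidableEq ι] [AddCommGroup H] (f : ι → H)
    {U S B : Finset ι} (hS : S ⊆ U) (hB : B ⊆ U) :
    ∑ j ∈ S ∆ B, f j = ∑ j ∈ S, (if j ∈ B then -f j else f j) + ∑ j ∈ B, f j := by
  have hSB : S ∆ B ⊆ U := by
    intro j hj
    rcases Finset.mem_symmDiff.1 hj with h | h
    exacts [hS h.1, hB h.1]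
  have key : ∀ (V : Finset ι) (g : ι → H), V ⊆ U →
      ∑ j ∈ V, g j = ∑ j ∈ U, if j ∈ V then g j else 0 := by
    intro V g hV
    rw [Finset.sum_ite_mem, Finset.inter_eq_right.2 hV]
  rw [key _ _ hSB, key _ _ hS, key _ _ hB, ← Finset.sum_add_distrib]
  refine Finset.sum_congr rfl fun j _ => ?_
  by_cases h1 : j ∈ S <;> by_cases h2 : j ∈ B <;> simp [Finset.mem_symmDiff, h1, h2]

/-- Zero-sum subsets for the sign-changed sequence inject into the subsets with the same sum
as `B`. -/
theorem card_zeroSum_le_card_sum_eq {ι H : Type*} [DecidableEq ι] [AddCommGroup H] [DecidableEq H]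
    (f : ι → H) {U B : Finset ι} (hB : B ⊆ U) :
    #{S ∈ U.powerset | ∑ j ∈ S, (if j ∈ B then -f j else f j) = 0} ≤
      #{S ∈ U.powerset | ∑ j ∈ S, f j = ∑ j ∈ B, f j} := by
  refine Finset.card_le_card_of_injOn (fun S => S ∆ B) ?_
    fun S _ S' _ h => symmDiff_left_injective B h
  intro S hS
  simp only [Finset.coe_filter, Finset.mem_powerset, Set.mem_setOf_eq] at hS ⊢
  refine ⟨fun j hj => ?_, ?_⟩
  · rcases Finset.mem_symmDiff.1 hj with h | h
    exacts [hS.1 h.1, hB h.1]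
  · rw [sum_symmDiff_eq f hS.1 hB, hS.2, zero_add]

/-- Olson's lower bound for the number of zero-sum subsets. -/
theorem two_pow_le_card_zeroSum {ι H : Type*} [DecidableEq ι] [AddCommGroup H] [DecidableEq H]
    (d : ℕ)
    (hD : ∀ f : Fin d → H, ∃ S : Finset (Fin d), S.Nonempty ∧ ∑ i ∈ S, f i = 0)
    (n : ℕ) (U : Finset ι) (hU : #U = n) (f : ι → H) :
    2 ^ (n + 1 - d) ≤ #{S ∈ U.powerset | ∑ j ∈ S, f j = 0} := by
  induction n generalizing U f with
  | zero =>
    have hd : 0 < d := by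
      obtain ⟨S, ⟨i, -⟩, -⟩ := hD 0
      exact i.pos
    rw [show 0 + 1 - d = 0 by omega, pow_zero]
    exact Finset.card_pos.2 ⟨∅, by simp⟩
  | succ n ih =>
    rcases lt_or_ge (n + 1) d with hlt | hge
    · rw [show n + 1 + 1 - d = 0 by omega, pow_zero]
      exact Finset.card_pos.2 ⟨∅, by simp⟩
    · obtain ⟨A, hAU, ⟨i, hiA⟩, hA0⟩ : ∃ A ⊆ U, A.Nonempty ∧ ∑ j ∈ A, f j = 0 := by
        let e : Fin d ↪ ι :=
          (Fin.castLEEmb (hge.trans hU.ge)).trans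
            (U.equivFin.symm.toEmbedding.trans (Function.Embedding.subtype _))
        obtain ⟨S, hS, h0⟩ := hD (fun k => f (e k))
        refine ⟨S.map e, ?_, hS.map, by rw [Finset.sum_map]; exact h0⟩
        intro j hj
        obtain ⟨k, -, rfl⟩ := Finset.mem_map.1 hj
        exact (U.equivFin.symm _).2
      have hcard : #(U.erase i) = n := by
        rw [Finset.card_erase_of_mem (hAU hiA), hU, Nat.add_sub_cancel]
      have h1 := ih (U.erase i) hcard f
      have h2 := (ih (U.erase i) hcard _).trans
        (card_zeroSum_le_card_sum_eq f (Finset.erase_subset_erase i hAU))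
      have hAi : f i + ∑ j ∈ A.erase i, f j = 0 := by
        rw [Finset.add_sum_erase _ _ hiA, hA0]
      have hsplit : #{S ∈ (U.erase i).powerset | ∑ j ∈ S, f j = 0} +
          #{S ∈ (U.erase i).powerset | ∑ j ∈ S, f j = ∑ j ∈ A.erase i, f j} ≤
          #{S ∈ U.powerset | ∑ j ∈ S, f j = 0} := by
        rw [← Finset.card_filter_add_card_filter_not
          (s := {S ∈ U.powerset | ∑ j ∈ S, f j = 0}) (fun S => i ∉ S)]
        refine add_le_add (Finset.card_le_card fun S hS => ?_)
          (Finset.card_le_card_of_injOn (insert i) ?_ ?_)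
        · simp only [Finset.mem_filter, Finset.mem_powerset, Finset.subset_erase] at hS ⊢
          exact ⟨⟨hS.1.1, hS.2⟩, hS.1.2⟩
        · intro S hS
          simp only [Finset.coe_filter, Finset.mem_filter, Finset.mem_powerset,
            Finset.subset_erase, Set.mem_setOf_eq] at hS ⊢
          refine ⟨⟨Finset.insert_subset (hAU hiA) hS.1.1, ?_⟩, by simp⟩
          rw [Finset.sum_insert hS.1.2, hS.2, hAi]
        · intro S hS S' hS' h
          simp only [Finset.coe_filter, Finset.mem_powerset, Finset.subset_erase,
            Set.mem_setOf_eq] at hS hS'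
          rw [← Finset.erase_insert hS.1.2, ← Finset.erase_insert hS'.1.2]
          exact congrArg (fun V => V.erase i) h
      rw [show n + 1 + 1 - d = (n + 1 - d) + 1 by omega, pow_succ]
      omega

theorem stmt16 {G : Type*} [AddCommGroup G] [Finite G] (X : AddSubgroup G)
    (d : ℕ) (hd : 0 < d)
    (hD : ∀ f : Fin d → G ⧸ X, ∃ S : Finset (Fin d), S.Nonempty ∧ ∑ i ∈ S, f i = 0)
    (ℓ : ℕ) (T : Fin ℓ → G) :
    2 ^ (ℓ + 1 - d) ≤ Nat.card {S : Finset (Fin ℓ) // ∑ i ∈ S, T i ∈ X} := by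
  classical
  have h := two_pow_le_card_zeroSum d hD ℓ (Finset.univ : Finset (Fin ℓ)) (by simp)
    (fun j => QuotientAddGroup.mk' X (T j))
  rw [Nat.card_eq_fintype_card, Fintype.card_subtype]
  refine h.trans (Finset.card_le_card fun S hS => ?_)
  rw [Finset.mem_filter, ← map_sum] at hS
  exact Finset.mem_filter.2 ⟨Finset.mem_univ _, (QuotientAddGroup.eq_zero_iff _).1 hS.2⟩
end

section
/- Let n ≥ 1 and let T : Fin ℓ → ZMod n be any sequence. Then the number of subsets S ⊆ Fin ℓ (including the empty set) with ∑_{i∈S} T i = 0 is at least 2^(ℓ − n + 1), where the exponent is interpreted via truncated (natural-number) subtraction. -/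
/-!
More is true: every value `g` that occurs as a subset sum of a sequence of length `m` over
`ZMod n` is the sum of at least `2 ^ (m + 1 - n)` subsets. The statement is the case
`g = 0`, which the empty set attains. This is proved by induction on `m`. If `m < n` there is
nothing to do. If `m ≥ n`, then `g` is attained by two distinct subsets
(`exists_ne_sum_eq`), so some index `a` lies in one of them but not in the other. Hence, after
removal of `a`, both `g` and `g - f a` are still subset sums; the induction hypothesis applies to
both, and the two counts add up to the count for `g`.

The second representation of `g = ∑ i ∈ B, f i` comes from negating the terms indexed by `B` and
taking a nonempty zero-sum subset `A` of the new sequence (pigeonhole on prefix sums): then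
the symmetric difference of `B` and `A` has the same sum as `B`.
-/

/-- A sequence of length at least `n` over `ZMod n` has a nonempty zero-sum subsequence. -/
lemma exists_nonempty_sum_eq_zero {ι : Type*} [DecidableEq ι] {n : ℕ} [NeZero n]
    (h : ι → ZMod n) (I : Finset ι) (hI : n ≤ I.card) :
    ∃ A ⊆ I, A.Nonempty ∧ ∑ i ∈ A, h i = 0 := by
  let e : Fin I.card → ι := fun j => (I.equivFin.symm j : ι)
  have he : Function.Injective e :=
    Subtype.val_injective.comp I.equivFin.symm.injective
  let P : Fin (I.card + 1) → Finset (Fin I.card) := fun k => {j | (j : ℕ) < k}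
  -- There are `I.card + 1 > n` prefix sums, so two of them coincide.
  obtain ⟨k, l, hkl, hs⟩ : ∃ k l : Fin (I.card + 1), k < l ∧
      ∑ j ∈ P k, h (e j) = ∑ j ∈ P l, h (e j) := by
    obtain ⟨k, l, hne, hs⟩ := Fintype.exists_ne_map_eq_of_card_lt
      (fun k : Fin (I.card + 1) => ∑ j ∈ P k, h (e j))
      (by rw [ZMod.card, Fintype.card_fin]; omega)
    rcases lt_or_gt_of_ne hne with hlt | hlt
    · exact ⟨k, l, hlt, hs⟩
    · exact ⟨l, k, hlt, hs.symm⟩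
  have hsub : P k ⊆ P l := by
    intro j hj
    simp only [P, Finset.mem_filter, Finset.mem_univ, true_and] at hj ⊢
    exact hj.trans hkl
  refine ⟨(P l \ P k).image e, ?_, ?_, ?_⟩
  · intro x hx
    obtain ⟨j, -, rfl⟩ := Finset.mem_image.mp hx
    exact (I.equivFin.symm j).2
  · have hk : (k : ℕ) < I.card := by have := l.2; have : (k : ℕ) < l := hkl; omega
    refine Finset.Nonempty.image ⟨⟨k, hk⟩, ?_⟩ e
    simpa [P] using hkl
  · rw [Finset.sum_image he.injOn]
    have := Finset.sum_sdiff (f := fun j => h (e j)) hsub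
    rw [hs] at this
    simpa using this

/-- If there are at least `n` terms, every subset sum is attained by a second subset. -/
lemma exists_ne_sum_eq {ι : Type*} [DecidableEq ι] {n : ℕ} [NeZero n]
    (f : ι → ZMod n) (I B : Finset ι) (hI : n ≤ I.card) (hB : B ⊆ I) :
    ∃ C ⊆ I, C ≠ B ∧ ∑ i ∈ C, f i = ∑ i ∈ B, f i := by
  obtain ⟨A, hA, hne, hs⟩ :=
    exists_nonempty_sum_eq_zero (fun i => if i ∈ B then -f i else f i) I hI
  refine ⟨symmDiff B A, ?_, ?_, ?_⟩
  · intro x hx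
    rcases Finset.mem_symmDiff.mp hx with hx | hx
    · exact hB hx.1
    · exact hA hx.1
  · intro h
    exact hne.ne_empty (symmDiff_eq_left.mp h)
  · rw [Finset.sum_ite, Finset.sum_neg_distrib, Finset.filter_mem_eq_inter,
      Finset.filter_notMem_eq_sdiff] at hs
    have h1 : ∑ i ∈ symmDiff B A, f i = ∑ i ∈ B \ A, f i + ∑ i ∈ A \ B, f i :=
      Finset.sum_union disjoint_sdiff_sdiff
    have h2 := Finset.sum_inter_add_sum_sdiff B A f
    rw [Finset.inter_comm] at hs
    rw [h1, ← h2]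
    linear_combination hs

/-- The generalisation of the theorem to all attained sums `g`, in which the induction closes. -/
lemma two_pow_le_card_filter_sum_eq {ι : Type*} [DecidableEq ι] {n : ℕ} [NeZero n]
    (f : ι → ZMod n) (m : ℕ) : ∀ (I : Finset ι) (g : ZMod n), I.card = m →
    (∃ B ⊆ I, ∑ i ∈ B, f i = g) →
    2 ^ (m + 1 - n) ≤ (I.powerset.filter fun S => ∑ i ∈ S, f i = g).card := by
  induction m with
  | zero =>
    rintro I g - ⟨B, hB, hg⟩
    have hn : 0 + 1 - n = 0 := by have := NeZero.pos n; omega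
    rw [hn, pow_zero, Nat.one_le_iff_ne_zero, Finset.card_ne_zero]
    exact ⟨B, by simp [hB, hg]⟩
  | succ m ih =>
    rintro I g hI ⟨B, hB, hg⟩
    rcases Nat.lt_or_ge (m + 1) n with hmn | hmn
    · have hn : m + 1 + 1 - n = 0 := by omega
      rw [hn, pow_zero, Nat.one_le_iff_ne_zero, Finset.card_ne_zero]
      exact ⟨B, by simp [hB, hg]⟩
    -- Some index `a` is used by one representation of `g` and avoided by another.
    obtain ⟨a, C, D, hC, hD, haC, haD, hgC, hgD⟩ : ∃ a, ∃ C D : Finset ι, C ⊆ I ∧ D ⊆ I ∧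
        a ∈ C ∧ a ∉ D ∧ ∑ i ∈ C, f i = g ∧ ∑ i ∈ D, f i = g := by
      obtain ⟨C, hC, hne, hs⟩ := exists_ne_sum_eq f I B (by omega) hB
      rw [hg] at hs
      by_cases hCB : C ⊆ B
      · have hBC : ¬ B ⊆ C := fun h => hne (hCB.antisymm h)
        obtain ⟨a, h1, h2⟩ := Finset.not_subset.mp hBC
        exact ⟨a, B, C, hB, hC, h1, h2, hg, hs⟩
      · obtain ⟨a, h1, h2⟩ := Finset.not_subset.mp hCB
        exact ⟨a, C, B, hC, hB, h1, h2, hs, hg⟩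
    have haI : a ∈ I := hC haC
    have hcard : (I.erase a).card = m := by rw [Finset.card_erase_of_mem haI, hI]; rfl
    have i1 := ih (I.erase a) g hcard
      ⟨D, Finset.subset_erase.mpr ⟨hD, haD⟩, hgD⟩
    have i2 := ih (I.erase a) (g - f a) hcard
      ⟨C.erase a, Finset.erase_subset_erase a hC, by
        rw [← hgC, ← Finset.add_sum_erase C f haC]; ring⟩
    have hpow : 2 ^ (m + 1 + 1 - n) = 2 ^ (m + 1 - n) + 2 ^ (m + 1 - n) := by
      rw [show m + 1 + 1 - n = (m + 1 - n) + 1 by omega, pow_succ]; ring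
    have hinj : Set.InjOn (insert a)
        (((I.erase a).powerset.filter fun S => ∑ i ∈ S, f i = g - f a : Finset (Finset ι)) :
          Set (Finset ι)) := by
      intro S hS S' hS' h
      simp only [Finset.coe_filter, Finset.mem_powerset, Finset.subset_erase,
        Set.mem_ofPred_eq] at hS hS'
      rw [← Finset.erase_insert hS.1.2, h, Finset.erase_insert hS'.1.2]
    rw [hpow]
    refine (Nat.add_le_add i1 i2).trans ?_
    rw [← Finset.card_image_of_injOn hinj, ← Finset.card_union_of_disjoint]
    · refine Finset.card_le_card ?_
      intro S hS
      rcases Finset.mem_union.mp hS with hS | hS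
      · simp only [Finset.mem_filter, Finset.mem_powerset, Finset.subset_erase] at hS ⊢
        exact ⟨hS.1.1, hS.2⟩
      · obtain ⟨S', hS', rfl⟩ := Finset.mem_image.mp hS
        simp only [Finset.mem_filter, Finset.mem_powerset, Finset.subset_erase] at hS' ⊢
        refine ⟨Finset.insert_subset haI hS'.1.1, ?_⟩
        rw [Finset.sum_insert hS'.1.2, hS'.2]
        ring
    · rw [Finset.disjoint_left]
      intro S hS hS2
      obtain ⟨S', -, rfl⟩ := Finset.mem_image.mp hS2
      simp [Finset.subset_erase] at hS

theorem stmt17 (n ℓ : ℕ) (hn : 1 ≤ n) (T : Fin ℓ → ZMod n) :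
    2 ^ (ℓ + 1 - n) ≤ Nat.card {S : Finset (Fin ℓ) // ∑ i ∈ S, T i = 0} := by
  have : NeZero n := ⟨by omega⟩
  have h := two_pow_le_card_filter_sum_eq T ℓ Finset.univ 0 (by simp)
    ⟨∅, Finset.empty_subset _, Finset.sum_empty⟩
  rwa [Finset.powerset_univ, ← Fintype.card_subtype, ← Nat.card_eq_fintype_card] at h
end

section
/- Let ℓ ≥ 1 and let T : Fin ℓ → ℤ be a sequence of positive integers (all T i ≥ 1) that is not 1-smooth. Then ∑_i T i ≥ 2ℓ. Moreover, ∑_i T i = 2ℓ holds if and only if the multiset of values of T is either {1 repeated ℓ − 1 times, together with the single value ℓ + 1} or {2 repeated ℓ times}. -/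
/-- The elements of `A` are added in increasing order of `T`: as long as the next value exceeds
the sum so far by at most `1`, the subset sums keep filling an initial interval. -/
lemma exists_subset_sum_of_no_gap {ι : Type*} [DecidableEq ι] (T : ι → ℤ) (A : Finset ι)
    (h : ∀ j ∈ A, T j ≤ 1 + ∑ i ∈ A with T i < T j, T i) (hpos : ∀ i, 1 ≤ T i) :
    ∀ s : ℤ, 0 ≤ s → s ≤ ∑ i ∈ A, T i → ∃ S ⊆ A, ∑ i ∈ S, T i = s := by
  induction A using Finset.induction_on_max_value T with
  | empty =>
    intro s h0 h1
    exact ⟨∅, by simp, by simp at h1 ⊢; omega⟩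
  | insert m A hm hmax ih =>
    intro s h0 h1
    rw [Finset.sum_insert hm] at h1
    have ih' := ih (by
      intro j hj
      have := h j (Finset.mem_insert_of_mem hj)
      rwa [Finset.filter_insert, if_neg (not_lt.mpr (hmax j hj))] at this)
    rcases le_or_gt s (∑ i ∈ A, T i) with hs | hs
    · obtain ⟨S, hS, e⟩ := ih' s h0 hs
      exact ⟨S, hS.trans (Finset.subset_insert _ _), e⟩
    · have hm1 := h m (Finset.mem_insert_self _ _)
      rw [Finset.filter_insert, if_neg (lt_irrefl _)] at hm1
      have h2 : ∑ i ∈ A with T i < T m, T i ≤ ∑ i ∈ A, T i :=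
        Finset.sum_le_sum_of_subset_of_nonneg (Finset.filter_subset _ _)
          fun i _ _ => by linarith [hpos i]
      obtain ⟨S, hS, e⟩ := ih' (s - T m) (by omega) (by omega)
      refine ⟨insert m S, Finset.insert_subset_insert _ hS, ?_⟩
      rw [Finset.sum_insert (fun hh => hm (hS hh)), e]
      ring

lemma exists_gap {ℓ : ℕ} (T : Fin ℓ → ℤ) (hpos : ∀ i, 1 ≤ T i) (hns : ¬ IsOneSmooth T) :
    ∃ j, 2 + ∑ i with T i < T j, T i ≤ T j := by
  by_contra! hcon
  apply hns
  unfold IsOneSmooth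
  ext s
  simp only [Set.mem_ofPred_eq, Set.mem_Icc]
  constructor
  · rintro ⟨S, ⟨k, hk⟩, rfl⟩
    constructor
    · exact (hpos k).trans
        (Finset.single_le_sum (f := T) (fun i _ => by linarith [hpos i]) hk)
    · exact Finset.sum_le_sum_of_subset_of_nonneg (Finset.subset_univ _)
        fun i _ _ => by linarith [hpos i]
  · rintro ⟨h1, h2⟩
    obtain ⟨S, -, e⟩ := exists_subset_sum_of_no_gap T Finset.univ
      (fun j _ => by have := hcon j; omega) hpos s (by omega) h2
    refine ⟨S, ?_, e⟩
    rw [Finset.nonempty_iff_ne_empty]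
    rintro rfl
    simp at e
    omega

theorem stmt18 {ℓ : ℕ} (hℓ : 1 ≤ ℓ) (T : Fin ℓ → ℤ) (hpos : ∀ i, 1 ≤ T i)
    (hns : ¬ IsOneSmooth T) :
    2 * (ℓ : ℤ) ≤ ∑ i, T i ∧
      ((∑ i, T i) = 2 * (ℓ : ℤ) ↔
        (Finset.univ.val.map T =
            Multiset.replicate (ℓ - 1) (1 : ℤ) + {((ℓ : ℤ) + 1)} ∨
          Finset.univ.val.map T = Multiset.replicate ℓ (2 : ℤ))) := by
  obtain ⟨j, hj⟩ := exists_gap T hpos hns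
  set B : Finset (Fin ℓ) := {i | T i < T j} with hB
  set C : Finset (Fin ℓ) := {i | ¬ T i < T j} with hC
  have hsum : ∑ i ∈ B, T i + ∑ i ∈ C, T i = ∑ i, T i :=
    Finset.sum_filter_add_sum_filter_not _ _ _
  have hcard : B.card + C.card = ℓ := by
    rw [hB, hC, Finset.card_filter_add_card_filter_not, Finset.card_univ, Fintype.card_fin]
  have hjC : j ∈ C := by simp [hC]
  have hc : 1 ≤ C.card := Finset.card_pos.mpr ⟨j, hjC⟩
  have hσ : (B.card : ℤ) ≤ ∑ i ∈ B, T i := by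
    simpa using Finset.card_nsmul_le_sum B T 1 fun i _ => hpos i
  have hCs : (C.card : ℤ) * T j ≤ ∑ i ∈ C, T i := by
    simpa using Finset.card_nsmul_le_sum C T (T j) fun i hi => by simpa [hC] using hi
  have hcardZ : (B.card : ℤ) + C.card = ℓ := by exact_mod_cast hcard
  have hcZ : (1 : ℤ) ≤ C.card := by exact_mod_cast hc
  have hCt : (C.card : ℤ) * (2 + ∑ i ∈ B, T i) ≤ C.card * T j :=
    mul_le_mul_of_nonneg_left hj (by omega)
  have hb0 : (0 : ℤ) ≤ B.card := by positivity
  refine ⟨by nlinarith, ?_, ?_⟩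
  · intro heq
    rcases Finset.eq_empty_or_nonempty B with hBe | hBn
    · right
      have hge : ∀ i, 2 ≤ T i := by
        intro i
        have hi : i ∉ B := by simp [hBe]
        rw [hBe] at hj
        simp [hB] at hi hj
        omega
      have hall : ∀ i ∈ Finset.univ, (2 : ℤ) = T i := by
        refine (Finset.sum_eq_sum_iff_of_le fun i _ => hge i).mp ?_
        simp [heq, mul_comm]
      rw [Multiset.eq_replicate]
      refine ⟨by simp, fun x hx => ?_⟩
      obtain ⟨i, -, rfl⟩ := Multiset.mem_map.mp hx
      exact (hall i (Finset.mem_univ i)).symm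
    · left
      have hb : (1 : ℤ) ≤ B.card := by exact_mod_cast Finset.card_pos.mpr hBn
      have hc1 : (C.card : ℤ) = 1 := by nlinarith
      have hσ1 : ∑ i ∈ B, T i = B.card := by rw [hc1] at hCs hCt hcardZ; linarith
      have hBone : ∀ i ∈ B, (1 : ℤ) = T i := by
        refine (Finset.sum_eq_sum_iff_of_le fun i _ => hpos i).mp ?_
        simp [hσ1]
      obtain ⟨k, hk⟩ := Finset.card_eq_one.mp (by exact_mod_cast hc1 : C.card = 1)
      obtain rfl : j = k := by simpa [hk] using hjC
      have hTj : T j = ℓ + 1 := by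
        rw [hk, Finset.sum_singleton] at hsum
        linarith
      have huniv : (Finset.univ : Finset (Fin ℓ)).val = B.val + C.val :=
        (Multiset.filter_add_not (fun i => T i < T j) Finset.univ.val).symm
      rw [huniv, Multiset.map_add, hk]
      congr 1
      · rw [Multiset.eq_replicate]
        refine ⟨by simp; omega, fun x hx => ?_⟩
        obtain ⟨i, hi, rfl⟩ := Multiset.mem_map.mp hx
        exact (hBone i hi).symm
      · simp [hTj]
  · have hS : ∑ i, T i = (Finset.univ.val.map T).sum := rfl
    rintro (h | h)
    · rw [hS, h]
      simp [Nat.cast_sub hℓ]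
      ring
    · rw [hS, h]
      simp [mul_comm]
end
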